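/- arXiv:2106.05464 — 2 statements merged into one kernel-verified Lean document; each statement's English description precedes it below -/
import Mathlib

section
/- Let ψ be a state on M_m of the form ψ(x) = tr_m(xh), where h is a positive m×m matrix all of whose eigenvalues are strictly positive rational numbers. Then there exist p ∈ ℕ and ucp maps S : M_m → M_p and T : M_p → M_m such that tr_p∘S = ψ, ψ∘T = tr_p, and ‖x − T(S(x))‖_ψ^♯ ≤ ‖h^{1/2}x − xh^{1/2}‖₂ for all x ∈ M_m. -/
open scoped ComplexOrder

noncomputable section

/-- A von Neumann algebra is closed under the complex scalar action. -/
instance VonNeumannAlgebra.instSMulMemClass {H : Type*} [NormedAddCommGroup H]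
    [InnerProductSpace ℂ H] [CompleteSpace H] :
    SMulMemClass (VonNeumannAlgebra H) ℂ (H →L[ℂ] H) :=
  ⟨fun {s} c _ ha => s.toStarSubalgebra.smul_mem ha c⟩

/-- An element of a `*`-ring is positive if it is of the form `star z * z`. -/
def IsPosElem {A : Type*} [Mul A] [Star A] (x : A) : Prop :=
  ∃ z : A, x = star z * z

/-- A linear map between complex `*`-algebras is completely positive if all of its
matrix amplifications map positive elements to positive elements. -/
def IsCPMap {A B : Type*} [Ring A] [StarRing A] [Algebra ℂ A]
    [Ring B] [StarRing B] [Algebra ℂ B] (Φ : A →ₗ[ℂ] B) : Prop :=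
  ∀ (k : ℕ) (x : Matrix (Fin k) (Fin k) A), IsPosElem x → IsPosElem (x.map Φ)

/-- A unital completely positive map. -/
def IsUCPMap {A B : Type*} [Ring A] [StarRing A] [Algebra ℂ A]
    [Ring B] [StarRing B] [Algebra ℂ B] (Φ : A →ₗ[ℂ] B) : Prop :=
  Φ 1 = 1 ∧ IsCPMap Φ

/-- A state on a complex `*`-algebra: unital and positive. -/
def IsState {A : Type*} [Ring A] [StarRing A] [Algebra ℂ A] (φ : A →ₗ[ℂ] ℂ) : Prop :=
  φ 1 = 1 ∧ ∀ x : A, 0 ≤ φ (star x * x)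

/-- A positive linear map is faithful if `Φ (star x * x) = 0` implies `x = 0`. -/
def IsFaithfulPosMap {A B : Type*} [Ring A] [StarRing A] [Algebra ℂ A]
    [AddCommMonoid B] [Module ℂ B] (Φ : A →ₗ[ℂ] B) : Prop :=
  ∀ x : A, Φ (star x * x) = 0 → x = 0

/-- The normalized trace `tr_m` on `m × m` complex matrices. -/
def trNorm (m : ℕ) (x : Matrix (Fin m) (Fin m) ℂ) : ℂ :=
  x.trace / (m : ℂ)

/-- `‖x‖_φ = φ(x* x)^{1/2}`. -/
def stateNorm {A : Type*} [Ring A] [StarRing A] [Algebra ℂ A]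
    (φ : A →ₗ[ℂ] ℂ) (x : A) : ℝ :=
  Real.sqrt (φ (star x * x)).re

/-- A matrix is positive with strictly positive rational eigenvalues if it is unitarily
conjugate to a diagonal matrix with strictly positive rational diagonal entries. -/
def HasPosRatEigenvalues {m : ℕ} (h : Matrix (Fin m) (Fin m) ℂ) : Prop :=
  ∃ (U : Matrix (Fin m) (Fin m) ℂ) (d : Fin m → ℚ),
    U ∈ Matrix.unitaryGroup (Fin m) ℂ ∧ (∀ i, 0 < d i) ∧
      h = star U * Matrix.diagonal (fun i => ((d i : ℂ))) * U

/-- `‖x‖_ψ^♯ = ψ((x* x + x x*)/2)^{1/2}`. -/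
def stateSharpNorm {A : Type*} [Ring A] [StarRing A] [Algebra ℂ A]
    (ψ : A →ₗ[ℂ] ℂ) (x : A) : ℝ :=
  Real.sqrt ((ψ (star x * x + x * star x)).re / 2)

/-- The Hilbert–Schmidt norm with respect to the normalized trace. -/
def hsNorm (m : ℕ) (x : Matrix (Fin m) (Fin m) ℂ) : ℝ :=
  Real.sqrt ((trNorm m (star x * x)).re)

open Matrix in
theorem isPosElem_comp {k n : ℕ} (x : Matrix (Fin k) (Fin k) (Matrix (Fin n) (Fin n) ℂ)) :
    IsPosElem x ↔ (Matrix.comp _ _ _ _ _ x).PosSemidef := by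
  have key : ∀ z : Matrix (Fin k) (Fin k) (Matrix (Fin n) (Fin n) ℂ),
      Matrix.comp _ _ _ _ _ (star z * z) =
        (Matrix.comp _ _ _ _ _ z)ᴴ * Matrix.comp _ _ _ _ _ z := by
    intro z
    rw [← compRingEquiv_apply, map_mul]
    congr 1
  constructor
  · rintro ⟨z, rfl⟩
    rw [key]
    exact posSemidef_conjTranspose_mul_self _
  · intro hx
    open scoped MatrixOrder in
    obtain ⟨w, hw⟩ := CStarAlgebra.nonneg_iff_eq_star_mul_self.mp hx.nonneg
    refine ⟨(Matrix.comp _ _ _ _ _).symm w, ?_⟩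
    apply (Matrix.comp _ _ _ _ _).injective
    rw [key, hw]
    simp [star_eq_conjTranspose]

open Matrix in
def krausMap {n p N : ℕ} (W : Fin N → Matrix (Fin n) (Fin p) ℂ) :
    Matrix (Fin n) (Fin n) ℂ →ₗ[ℂ] Matrix (Fin p) (Fin p) ℂ where
  toFun x := ∑ c, (W c)ᴴ * x * W c
  map_add' x y := by simp [Matrix.mul_add, Matrix.add_mul, Finset.sum_add_distrib]
  map_smul' a x := by simp [Finset.smul_sum]

open Matrix in
theorem krausMap_apply {n p N : ℕ} (W : Fin N → Matrix (Fin n) (Fin p) ℂ) (x) :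
    krausMap W x = ∑ c, (W c)ᴴ * x * W c := rfl

open Matrix in
theorem krausMap_cp {n p N : ℕ} (W : Fin N → Matrix (Fin n) (Fin p) ℂ) :
    IsCPMap (krausMap W) := by
  intro k x hx
  rw [isPosElem_comp] at hx ⊢
  let V : Fin N → Matrix (Fin k × Fin n) (Fin k × Fin p) ℂ := fun c =>
    Matrix.of fun a b => if a.1 = b.1 then W c a.2 b.2 else 0
  have : Matrix.comp _ _ _ _ _ (x.map (krausMap W)) =
      ∑ c, (V c)ᴴ * Matrix.comp _ _ _ _ _ x * V c := by
    ext ⟨a, i⟩ ⟨b, j⟩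
    change (krausMap W (x a b)) i j = _
    rw [krausMap_apply, Matrix.sum_apply, Matrix.sum_apply]
    refine Finset.sum_congr rfl fun c _ => ?_
    rw [Matrix.mul_apply, Matrix.mul_apply, Fintype.sum_prod_type, Finset.sum_eq_single b]
    · refine Finset.sum_congr rfl fun t _ => ?_
      rw [Matrix.mul_apply, Matrix.mul_apply, Fintype.sum_prod_type, Finset.sum_eq_single a]
      · have hc : ∀ y, Matrix.comp _ _ _ _ _ x (a, y) (b, t) = x a b y t := fun _ => rfl
        simp [V, hc]
      · intro l _ hl
        simp [V, hl]
      · simp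
    · intro l _ hl
      simp [V, hl]
    · simp
  rw [this]
  exact posSemidef_sum _ fun c _ => hx.conjTranspose_mul_mul_same _

open Matrix in
theorem sqrt_uniq {m : ℕ} (q : Fin m → ℝ) (hq : ∀ i, 0 < q i) (r : Matrix (Fin m) (Fin m) ℂ)
    (hr : r.PosSemidef)
    (hrr : r * r = Matrix.diagonal (fun i => ((q i ^ 2 : ℝ) : ℂ))) :
    r = Matrix.diagonal (fun i => (q i : ℂ)) := by
  set Q : Matrix (Fin m) (Fin m) ℂ := Matrix.diagonal (fun i => (q i : ℂ)) with hQ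
  have hQQ : Q * Q = r * r := by
    rw [hrr, hQ, diagonal_mul_diagonal]; congr 1; ext i; push_cast; ring
  have hcomm : r * Q = Q * r := by
    have h1 : r * (Q * Q) = (Q * Q) * r := by rw [hQQ, mul_assoc]
    rw [hQQ, hrr] at h1
    ext i j
    have h2 := congrFun (congrFun h1 i) j
    rw [mul_diagonal, diagonal_mul] at h2
    rw [hQ, mul_diagonal, diagonal_mul]
    by_cases h0 : r i j = 0
    · simp [h0]
    · rw [mul_comm] at h2
      have h3 := mul_right_cancel₀ h0 h2
      have h4 : q j ^ 2 = q i ^ 2 := by exact_mod_cast h3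
      have h5 : q j = q i := (sq_eq_sq₀ (hq j).le (hq i).le).mp h4
      rw [h5, mul_comm]
  have hQpd : Q.PosDef := by
    rw [hQ, posDef_diagonal_iff]; intro i; exact_mod_cast hq i
  have hu := (hQpd.add_posSemidef hr).isUnit
  have h0 : (Q + r) * (Q - r) = 0 := by
    rw [mul_sub, add_mul, add_mul, hcomm, hQQ]; abel
  have := (hu.mul_right_eq_zero).mp h0
  exact (sub_eq_zero.mp this).symm

theorem exists_nat_weights {m : ℕ} (d : Fin m → ℚ) (hd : ∀ i, 0 < d i) :
    ∃ (N : ℕ) (q : Fin m → ℕ), 0 < N ∧ (∀ i, 0 < q i) ∧ ∀ i, (q i : ℚ) = d i * N := by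
  have hex : ∀ i, ∃ k : ℕ, (k : ℚ) = d i * (∏ j, (d j).den : ℕ) := by
    intro i
    obtain ⟨t, ht⟩ := Finset.dvd_prod_of_mem (fun j => (d j).den) (Finset.mem_univ i)
    refine ⟨(d i).num.toNat * t, ?_⟩
    rw [ht]
    have h1 : (((d i).num.toNat : ℤ) : ℚ) = (d i).num := by
      rw [Int.toNat_of_nonneg (Rat.num_nonneg.mpr (hd i).le)]
    have h2 := Rat.mul_den_eq_num (d i)
    push_cast at h1 ⊢
    rw [h1, ← h2]; ring
  choose q hq using hex
  have hN : 0 < ∏ j, (d j).den := Finset.prod_pos fun j _ => (d j).den_pos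
  refine ⟨_, q, hN, fun i => ?_, hq⟩
  have : (0 : ℚ) < q i := by
    rw [hq]; exact mul_pos (hd i) (by exact_mod_cast hN)
  exact_mod_cast this

/-- the isometry pieces -/
def Wm {m : ℕ} (q : Fin m → ℕ) (c : Fin (∑ i, q i)) : Matrix (Fin m) (Fin (∑ i, q i)) ℂ :=
  Matrix.of fun i s => if (finSigmaFinEquiv.symm s).1 = i ∧
    ((finSigmaFinEquiv.symm s).2 : ℕ) = c then 1 else 0

theorem Wm_apply {m : ℕ} (q : Fin m → ℕ) (c : Fin (∑ i, q i)) (i j : Fin m) (a : Fin (q j)) :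
    Wm q c i (finSigmaFinEquiv ⟨j, a⟩) = if j = i ∧ (a : ℕ) = c then 1 else 0 := by
  unfold Wm
  rw [Matrix.of_apply, Equiv.symm_apply_apply]

open Matrix in
theorem Wm_sum {m : ℕ} (q : Fin m → ℕ) : ∑ c, (Wm q c)ᴴ * Wm q c = 1 := by
  ext s t
  obtain ⟨⟨i, a⟩, rfl⟩ := finSigmaFinEquiv.surjective s
  obtain ⟨⟨j, b⟩, rfl⟩ := finSigmaFinEquiv.surjective t
  have hle : q j ≤ ∑ i, q i := Finset.single_le_sum (fun _ _ => Nat.zero_le _) (Finset.mem_univ j)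
  have hb : (b : ℕ) < ∑ i, q i := b.2.trans_le hle
  rw [Matrix.sum_apply, Finset.sum_eq_single ⟨b, hb⟩]
  · rw [Matrix.mul_apply, Finset.sum_eq_single j]
    · by_cases hij : i = j
      · subst hij
        by_cases hab : a = b
        · subst hab
          rw [Matrix.one_apply_eq]
          simp [Wm_apply]
        · have : ¬ ((a : ℕ) = b) := fun h => hab (Fin.ext h)
          simp [Wm_apply, Matrix.one_apply, hab, this]
      · simp [Wm_apply, Matrix.one_apply, hij]
    · intro k _ hk
      simp [Wm_apply, hk.symm]
    · simp
  · intro c _ hc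
    rw [Matrix.mul_apply]
    apply Finset.sum_eq_zero
    intro k _
    have : ¬ ((b : ℕ) = c) := fun h => hc (Fin.ext h.symm)
    simp [Wm_apply, this]
  · simp

open Matrix in
theorem Wm_mul {m : ℕ} (q : Fin m → ℕ) (b c) : Wm q b * (Wm q c)ᴴ =
    if b = c then Matrix.diagonal (fun i => if (c : ℕ) < q i then (1 : ℂ) else 0) else 0 := by
  ext i j
  rw [Matrix.mul_apply, ← finSigmaFinEquiv.sum_comp, Fintype.sum_sigma]
  rw [Finset.sum_eq_single i]
  · by_cases hij : i = j
    · subst hij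
      by_cases hbc : b = c
      · subst hbc
        by_cases hlt : (b : ℕ) < q i
        · rw [Finset.sum_eq_single ⟨b, hlt⟩]
          · simp [Wm_apply, hlt]
          · intro a _ ha
            have : ¬ ((a : ℕ) = b) := fun h => ha (Fin.ext h)
            simp [Wm_apply, this]
          · simp
        · rw [Finset.sum_eq_zero]
          · simp [hlt]
          · intro a _
            have : ¬ ((a : ℕ) = b) := by have := a.2; omega
            simp [Wm_apply, this]
      · rw [Finset.sum_eq_zero]
        · simp [hbc]
        · intro a _
          by_cases h1 : (a : ℕ) = b
          · have : ¬ ((b : ℕ) = c) := fun h => hbc (Fin.ext h)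
            simp [Wm_apply, h1, this]
          · simp [Wm_apply, h1]
    · rw [Finset.sum_eq_zero]
      · split_ifs <;> simp [hij]
      · intro a _
        simp [Wm_apply, hij]
  · intro k _ hk
    apply Finset.sum_eq_zero
    intro a _
    simp [Wm_apply, hk]
  · simp

theorem sum_lt_min {M a b : ℕ} (ha : a ≤ M) :
    ∑ c : Fin M, (if (c : ℕ) < a then (1 : ℂ) else 0) * (if (c : ℕ) < b then (1 : ℂ) else 0)
      = (min a b : ℕ) := by
  rw [Fin.sum_univ_eq_sum_range (fun c => (if c < a then (1 : ℂ) else 0) * (if c < b then (1 : ℂ) else 0))]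
  have : ∀ c, (if c < a then (1 : ℂ) else 0) * (if c < b then (1 : ℂ) else 0) =
    if c < min a b then 1 else 0 := by
    intro c; by_cases h1 : c < a <;> by_cases h2 : c < b <;> simp [h1, h2]
  simp_rw [this]
  rw [Finset.sum_ite, Finset.sum_const_zero, add_zero, Finset.sum_const, nsmul_one]
  congr 1
  rw [show (Finset.range M).filter (fun c => c < min a b) = Finset.range (min a b) by
    ext c; simp only [Finset.mem_filter, Finset.mem_range]; omega]
  simp

theorem scalar_ineq (a b : ℝ) (ha : 0 < a) (hb : 0 < b) :
    (1 - (min a b) / (√a * √b)) ^ 2 * (a + b) ≤ 2 * (√a - √b) ^ 2 := by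
  wlog hab : a ≤ b generalizing a b
  · have := this b a hb ha (le_of_not_ge hab)
    rw [min_comm, mul_comm √b, add_comm b a] at this
    have h := sub_sq_comm √b √a
    linarith
  rw [min_eq_left hab]
  have h1 : a = √a * √a := (Real.mul_self_sqrt ha.le).symm
  have h2 : b = √b * √b := (Real.mul_self_sqrt hb.le).symm
  have pa := Real.sqrt_pos.mpr ha
  have pb := Real.sqrt_pos.mpr hb
  have h3 : a / (√a * √b) = √a / √b := by
    rw [div_eq_div_iff (by positivity) (by positivity)]; nlinarith
  have h4 : (√a - √b) ^ 2 = (1 - √a / √b) ^ 2 * b := by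
    conv_rhs => rw [h2]
    rw [show (√(√b * √b)) = √b by rw [← h2]]
    field_simp; ring
  rw [h3, h4]
  nlinarith [sq_nonneg (1 - √a / √b)]

open Matrix in
theorem trace_star_mul {m : ℕ} (y : Matrix (Fin m) (Fin m) ℂ) (d : Fin m → ℝ) :
    ((star y * y * Matrix.diagonal (fun i => (d i : ℂ))).trace).re
      = ∑ i, ∑ j, ‖y i j‖ ^ 2 * d j := by
  rw [Finset.sum_comm]
  simp only [Matrix.trace, Matrix.diag, Matrix.mul_diagonal, Complex.re_sum]
  refine Finset.sum_congr rfl fun j _ => ?_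
  rw [Matrix.mul_apply, Finset.sum_mul, Complex.re_sum]
  refine Finset.sum_congr rfl fun i _ => ?_
  rw [star_apply, Complex.star_def, ← Complex.normSq_eq_conj_mul_self, Complex.normSq_eq_norm_sq]
  norm_cast

open Matrix in
theorem trace_mul_star {m : ℕ} (y : Matrix (Fin m) (Fin m) ℂ) (d : Fin m → ℝ) :
    ((y * star y * Matrix.diagonal (fun i => (d i : ℂ))).trace).re
      = ∑ i, ∑ j, ‖y i j‖ ^ 2 * d i := by
  simp only [Matrix.trace, Matrix.diag, Matrix.mul_diagonal, Complex.re_sum]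
  refine Finset.sum_congr rfl fun i _ => ?_
  rw [Matrix.mul_apply, Finset.sum_mul, Complex.re_sum]
  refine Finset.sum_congr rfl fun j _ => ?_
  rw [star_apply, Complex.star_def, mul_comm (y i j), ← Complex.normSq_eq_conj_mul_self,
    Complex.normSq_eq_norm_sq]
  norm_cast

open Matrix in
theorem Wm_sum' {m : ℕ} (q : Fin m → ℕ) :
    ∑ c, Wm q c * (Wm q c)ᴴ = Matrix.diagonal (fun i => (q i : ℂ)) := by
  ext i j
  have hle : q i ≤ ∑ i, q i := Finset.single_le_sum (fun _ _ => Nat.zero_le _) (Finset.mem_univ i)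
  rw [Matrix.sum_apply]
  by_cases hij : i = j
  · subst hij
    have := sum_lt_min (b := q i) hle
    simp only [Wm_mul, if_true, Matrix.diagonal_apply_eq]
    rw [min_self] at this
    rw [← this]
    refine Finset.sum_congr rfl fun c _ => ?_
    split_ifs <;> simp
  · simp [Wm_mul, hij]

open Matrix in
theorem Wm_TS {m : ℕ} (q : Fin m → ℕ) (x : Matrix (Fin m) (Fin m) ℂ) :
    ∑ b, Wm q b * (∑ c, (Wm q c)ᴴ * x * Wm q c) * (Wm q b)ᴴ =
      Matrix.of fun i j => x i j * (min (q i) (q j) : ℕ) := by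
  have h1 : ∀ b, Wm q b * (∑ c, (Wm q c)ᴴ * x * Wm q c) * (Wm q b)ᴴ =
      Matrix.diagonal (fun i => if (b : ℕ) < q i then (1 : ℂ) else 0) * x *
      Matrix.diagonal (fun i => if (b : ℕ) < q i then (1 : ℂ) else 0) := by
    intro b
    rw [Matrix.mul_sum, Matrix.sum_mul, Finset.sum_eq_single b]
    · have h2 := Wm_mul q b b
      rw [if_pos rfl] at h2
      simp only [← h2, Matrix.mul_assoc]
    · intro c _ hc
      have h2 := Wm_mul q b c
      rw [if_neg hc.symm] at h2
      rw [Matrix.mul_assoc (Wm q c)ᴴ, ← Matrix.mul_assoc (Wm q b), h2]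
      simp
    · simp
  simp_rw [h1]
  ext i j
  have hle : q i ≤ ∑ i, q i := Finset.single_le_sum (fun _ _ => Nat.zero_le _) (Finset.mem_univ i)
  rw [Matrix.sum_apply, Matrix.of_apply, ← sum_lt_min hle, Finset.mul_sum]
  refine Finset.sum_congr rfl fun c _ => ?_
  rw [Matrix.mul_diagonal, Matrix.diagonal_mul]; ring

open Matrix in
theorem lemma3_2 (m : ℕ) (ψ : Matrix (Fin m) (Fin m) ℂ →ₗ[ℂ] ℂ) (hψstate : IsState ψ)
    (h : Matrix (Fin m) (Fin m) ℂ) (hh : HasPosRatEigenvalues h)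
    (hψ : ∀ x : Matrix (Fin m) (Fin m) ℂ, ψ x = trNorm m (x * h))
    -- `r = h^{1/2}` is the (unique) positive square root of `h`
    (r : Matrix (Fin m) (Fin m) ℂ) (hr : IsPosElem r) (hrr : r * r = h) :
    ∃ (p : ℕ) (S : Matrix (Fin m) (Fin m) ℂ →ₗ[ℂ] Matrix (Fin p) (Fin p) ℂ)
      (T : Matrix (Fin p) (Fin p) ℂ →ₗ[ℂ] Matrix (Fin m) (Fin m) ℂ),
      IsUCPMap S ∧ IsUCPMap T ∧
      (∀ x : Matrix (Fin m) (Fin m) ℂ, trNorm p (S x) = ψ x) ∧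
      (∀ y : Matrix (Fin p) (Fin p) ℂ, ψ (T y) = trNorm p y) ∧
      ∀ x : Matrix (Fin m) (Fin m) ℂ,
        stateSharpNorm ψ (x - T (S x)) ≤ hsNorm m (r * x - x * r) := by
  obtain ⟨U, d, hU, hd, hhU⟩ := hh
  have hUU : U * Uᴴ = 1 := Matrix.mem_unitaryGroup_iff.mp hU
  have hUU' : Uᴴ * U = 1 := Matrix.mem_unitaryGroup_iff'.mp hU
  rw [star_eq_conjTranspose] at hhU
  obtain ⟨N, q, hN, hq, hqd⟩ := exists_nat_weights d hd
  have hNR : (0 : ℝ) < N := by exact_mod_cast hN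
  have hqR : ∀ i, (0 : ℝ) < q i := fun i => by exact_mod_cast hq i
  have hdR : ∀ i, ((d i : ℚ) : ℝ) = q i / N := fun i => by
    rw [eq_div_iff hNR.ne']; exact_mod_cast (hqd i).symm
  have hdC : ∀ i, ((d i : ℚ) : ℂ) = q i / N := fun i => by
    rw [eq_div_iff (by exact_mod_cast hN.ne')]; exact_mod_cast (hqd i).symm
  have hNC : (N : ℂ) ≠ 0 := by exact_mod_cast hN.ne'
  have h1 := hψstate.1
  have hm : (m : ℂ) ≠ 0 := by
    intro hm
    rw [hψ, trNorm, hm, div_zero] at h1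
    exact zero_ne_one h1
  have htr : ∀ A : Matrix (Fin m) (Fin m) ℂ, (Uᴴ * A * U).trace = A.trace := by
    intro A
    rw [Matrix.trace_mul_comm, ← Matrix.mul_assoc, hUU, Matrix.one_mul]
  have hp : ((∑ i, q i : ℕ) : ℂ) = m * N := by
    rw [hψ, trNorm, one_mul, hhU, htr, div_eq_one_iff_eq hm, Matrix.trace_diagonal] at h1
    rw [← h1, Finset.sum_mul]
    push_cast
    refine Finset.sum_congr rfl fun i _ => ?_
    rw [hdC]; field_simp
  have hpne : ((∑ i, q i : ℕ) : ℂ) ≠ 0 := by rw [hp]; exact mul_ne_zero hm hNC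
  let g : Fin m → ℂ := fun i => ((1 / √(q i : ℝ) : ℝ) : ℂ)
  let G : Matrix (Fin m) (Fin m) ℂ := Matrix.diagonal g
  have hg : ∀ i, g i * g i * q i = 1 := by
    intro i
    have : (1 / √(q i : ℝ)) * (1 / √(q i : ℝ)) * (q i : ℝ) = 1 := by
      have h2 := Real.mul_self_sqrt (hqR i).le
      have h3 := Real.sqrt_pos.mpr (hqR i)
      field_simp
      nlinarith
    simp only [g]
    exact_mod_cast congrArg (fun t : ℝ => (t : ℂ)) this
  have hGH : Gᴴ = G := by
    rw [Matrix.diagonal_conjTranspose]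
    congr 1
    ext i
    simp [g]
  let S := krausMap (fun c => Uᴴ * Wm q c)
  let T := krausMap (fun c => (Wm q c)ᴴ * (G * U))
  have hS : ∀ x, S x = ∑ c, (Wm q c)ᴴ * (U * x * Uᴴ) * Wm q c := by
    intro x
    simp only [S, krausMap_apply, Matrix.conjTranspose_mul, Matrix.conjTranspose_conjTranspose,
      Matrix.mul_assoc]
  have hT : ∀ y, T y = Uᴴ * (G * (∑ c, Wm q c * y * (Wm q c)ᴴ) * G) * U := by
    intro y
    simp only [T, krausMap_apply, Matrix.conjTranspose_mul, Matrix.conjTranspose_conjTranspose,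
      hGH, Matrix.mul_sum, Matrix.sum_mul, Matrix.mul_assoc]
  have hTS : ∀ x, T (S x) = Uᴴ * (Matrix.of fun i j =>
      (U * x * Uᴴ) i j * ((min (q i) (q j) : ℕ) * g i * g j)) * U := by
    intro x
    rw [hT, hS, Wm_TS]
    congr 2
    ext i j
    simp only [G, Matrix.mul_diagonal, Matrix.diagonal_mul, Matrix.of_apply]
    ring
  refine ⟨∑ i, q i, S, T, ⟨?_, krausMap_cp _⟩, ⟨?_, krausMap_cp _⟩, ?_, ?_, ?_⟩
  · rw [hS, Matrix.mul_one, hUU]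
    simp only [Matrix.mul_one]
    exact Wm_sum q
  · rw [hT]
    simp only [Matrix.mul_one]
    rw [Wm_sum', Matrix.diagonal_mul_diagonal, Matrix.diagonal_mul_diagonal]
    have : (fun i => g i * (q i : ℂ) * g i) = fun _ => 1 := by
      ext i; rw [← hg i]; ring
    rw [this, Matrix.diagonal_one, Matrix.mul_one, hUU']
  · intro x
    have h2 : (S x).trace = ((U * x * Uᴴ) * Matrix.diagonal (fun i => (q i : ℂ))).trace := by
      rw [hS, ← Wm_sum', Matrix.mul_sum, Matrix.trace_sum, Matrix.trace_sum]
      refine Finset.sum_congr rfl fun c _ => ?_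
      rw [Matrix.trace_mul_comm, ← Matrix.mul_assoc, Matrix.trace_mul_comm]
    have h3 : Matrix.diagonal (fun i => ((d i : ℚ) : ℂ)) =
        (N : ℂ)⁻¹ • Matrix.diagonal (fun i => (q i : ℂ)) := by
      rw [← Matrix.diagonal_smul]
      congr 1; ext i; rw [hdC]; simp [div_eq_inv_mul]
    rw [trNorm, h2, hp, hψ, trNorm, hhU, h3]
    have h4 : (x * (Uᴴ * ((N : ℂ)⁻¹ • Matrix.diagonal (fun i => (q i : ℂ))) * U)).trace =
        (N : ℂ)⁻¹ * ((U * x * Uᴴ) * Matrix.diagonal (fun i => (q i : ℂ))).trace := by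
      rw [← Matrix.mul_assoc, Matrix.trace_mul_comm]
      simp [Matrix.mul_assoc]
    rw [h4]
    field_simp
  · intro y
    have h2 : G * Matrix.diagonal (fun i => ((d i : ℚ) : ℂ)) * G = (N : ℂ)⁻¹ • 1 := by
      rw [Matrix.diagonal_mul_diagonal, Matrix.diagonal_mul_diagonal, ← Matrix.diagonal_one,
        ← Matrix.diagonal_smul]
      congr 1; ext i
      have := hg i
      rw [hdC]
      simp only [Pi.smul_apply, smul_eq_mul, mul_one]
      rw [← one_mul (N : ℂ)⁻¹, ← this]; ring
    have h3 : (∑ c, Wm q c * y * (Wm q c)ᴴ).trace = y.trace := by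
      rw [Matrix.trace_sum]
      conv_rhs => rw [← Matrix.mul_one y, ← Wm_sum q, Matrix.mul_sum, Matrix.trace_sum]
      refine Finset.sum_congr rfl fun c _ => ?_
      rw [Matrix.mul_assoc, Matrix.trace_mul_comm, Matrix.mul_assoc]
    rw [hψ, trNorm, trNorm, hp, hT, hhU]
    have h4 : ∀ A D : Matrix (Fin m) (Fin m) ℂ,
        (Uᴴ * (G * A * G) * U * (Uᴴ * D * U)).trace = (A * (G * D * G)).trace := by
      intro A D
      have : Uᴴ * (G * A * G) * U * (Uᴴ * D * U) = Uᴴ * (G * A * G * D) * U := by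
        calc _ = Uᴴ * (G * A * G) * (U * Uᴴ) * D * U := by simp only [Matrix.mul_assoc]
          _ = _ := by rw [hUU]; simp only [Matrix.mul_assoc, Matrix.one_mul]
      rw [this, htr, Matrix.mul_assoc, Matrix.mul_assoc, Matrix.mul_assoc, Matrix.trace_mul_comm]
      simp only [Matrix.mul_assoc]
    rw [h4, h2]
    rw [Matrix.mul_smul, Matrix.mul_one, Matrix.trace_smul, h3, smul_eq_mul]
    field_simp
  · intro x
    set x' := U * x * Uᴴ with hx'
    have hxx : x = Uᴴ * x' * U := by
      calc x = (Uᴴ * U) * x * (Uᴴ * U) := by rw [hUU']; simp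
        _ = _ := by rw [hx']; simp only [Matrix.mul_assoc]
    have hconj : ∀ A B : Matrix (Fin m) (Fin m) ℂ,
        (Uᴴ * A * U) * (Uᴴ * B * U) = Uᴴ * (A * B) * U := by
      intro A B
      calc _ = Uᴴ * A * (U * Uᴴ) * B * U := by simp only [Matrix.mul_assoc]
        _ = _ := by rw [hUU]; simp only [Matrix.mul_assoc, Matrix.one_mul]
    have hstar : ∀ A : Matrix (Fin m) (Fin m) ℂ, star (Uᴴ * A * U) = Uᴴ * star A * U := by
      intro A
      simp [star_eq_conjTranspose, Matrix.mul_assoc]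
    have hr' : r = Uᴴ * Matrix.diagonal (fun i => ((√(d i : ℝ) : ℝ) : ℂ)) * U := by
      have hrp : r.PosSemidef := by
        obtain ⟨z, rfl⟩ := hr
        exact posSemidef_conjTranspose_mul_self z
      have hsq := sqrt_uniq (fun i => √(d i : ℝ))
        (fun i => Real.sqrt_pos.mpr (by exact_mod_cast hd i)) (U * r * Uᴴ)
        (hrp.mul_mul_conjTranspose_same U) (by
          have : U * r * Uᴴ * (U * r * Uᴴ) = U * (r * r) * Uᴴ := by
            calc _ = U * r * (Uᴴ * U) * r * Uᴴ := by simp only [Matrix.mul_assoc]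
              _ = _ := by rw [hUU']; simp only [Matrix.mul_assoc, Matrix.one_mul]
          rw [this, hrr, hhU]
          calc _ = (U * Uᴴ) * Matrix.diagonal (fun i => ((d i : ℚ) : ℂ)) * (U * Uᴴ) := by
                simp only [Matrix.mul_assoc]
            _ = _ := by
                rw [hUU, Matrix.one_mul, Matrix.mul_one]
                congr 1; ext i
                rw [Real.sq_sqrt (by exact_mod_cast (hd i).le)]
                simp)
      rw [← hsq]
      calc r = (Uᴴ * U) * r * (Uᴴ * U) := by rw [hUU']; simp
        _ = _ := by simp only [Matrix.mul_assoc]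
    let t : Fin m → Fin m → ℝ := fun i j =>
      1 - min (q i : ℝ) (q j) / (√(q i : ℝ) * √(q j : ℝ))
    let z : Matrix (Fin m) (Fin m) ℂ := Matrix.of fun i j => x' i j * (t i j : ℂ)
    have hz : x - T (S x) = Uᴴ * z * U := by
      rw [hTS, ← hx']
      conv_lhs => rw [hxx]
      rw [← Matrix.sub_mul, ← Matrix.mul_sub]
      congr 2
      ext i j
      have hmin : ((min (q i : ℝ) (q j) : ℝ) : ℂ) = ((min (q i) (q j) : ℕ) : ℂ) := by
        rw [← Nat.cast_min, Complex.ofReal_natCast]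
      have ht : (t i j : ℂ) = 1 - (min (q i) (q j) : ℕ) * g i * g j := by
        simp only [t, g]
        rw [Complex.ofReal_sub, Complex.ofReal_div _ (√(q i : ℝ) * √(q j : ℝ)), hmin,
          Complex.ofReal_mul, Complex.ofReal_one, Complex.ofReal_div, Complex.ofReal_div,
          Complex.ofReal_one]
        ring
      simp only [Matrix.sub_apply, Matrix.of_apply, z]
      rw [ht]
      ring
    let w : Matrix (Fin m) (Fin m) ℂ :=
      Matrix.of fun i j => x' i j * ((√(d i : ℝ) - √(d j : ℝ) : ℝ) : ℂ)
    have hw : r * x - x * r = Uᴴ * w * U := by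
      conv_lhs => rw [hxx, hr']
      rw [hconj, hconj, ← Matrix.sub_mul, ← Matrix.mul_sub]
      congr 2
      ext i j
      simp only [Matrix.sub_apply, Matrix.of_apply, w, Matrix.mul_diagonal, Matrix.diagonal_mul]
      push_cast
      ring
    have hD : Matrix.diagonal (fun i => ((d i : ℚ) : ℂ)) =
        Matrix.diagonal (fun i => (((d i : ℝ)) : ℂ)) := by
      simp
    have hmR : (0 : ℝ) < m := by
      have : m ≠ 0 := by exact_mod_cast hm
      exact_mod_cast Nat.pos_of_ne_zero this
    have hre : ∀ a : ℂ, (a / (m : ℂ)).re = a.re / m := by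
      intro a
      rw [← Complex.ofReal_natCast, Complex.div_ofReal_re]
    have hL : (ψ (star (x - T (S x)) * (x - T (S x)) + (x - T (S x)) * star (x - T (S x)))).re
        = (∑ i, ∑ j, ‖z i j‖ ^ 2 * ((d i : ℝ) + d j)) / m := by
      rw [hz, hstar, hconj, hconj, hψ, trNorm, hhU, add_mul, hconj, hconj, hre, hD,
        Matrix.trace_add, htr, htr, Complex.add_re, trace_star_mul, trace_mul_star,
        ← Finset.sum_add_distrib]
      congr 1
      refine Finset.sum_congr rfl fun i _ => ?_
      rw [← Finset.sum_add_distrib]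
      refine Finset.sum_congr rfl fun j _ => ?_
      ring
    have hR : (trNorm m (star (r * x - x * r) * (r * x - x * r))).re =
        (∑ i, ∑ j, ‖w i j‖ ^ 2) / m := by
      have := trace_star_mul w (fun _ => 1)
      simp only [Complex.ofReal_one, Matrix.diagonal_one, mul_one] at this
      rw [hw, hstar, hconj, trNorm, hre, htr, this]
    unfold stateSharpNorm hsNorm
    apply Real.sqrt_le_sqrt
    rw [hL, hR, div_right_comm]
    apply div_le_div_of_nonneg_right _ hmR.le
    rw [Finset.sum_div]
    refine Finset.sum_le_sum fun i _ => ?_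
    rw [Finset.sum_div]
    refine Finset.sum_le_sum fun j _ => ?_
    simp only [z, w, Matrix.of_apply, norm_mul, Complex.norm_real, mul_pow, Real.norm_eq_abs,
      sq_abs]
    have hs := scalar_ineq (q i) (q j) (hqR i) (hqR j)
    have hsd : (√(d i : ℝ) - √(d j : ℝ)) ^ 2 = (√(q i : ℝ) - √(q j : ℝ)) ^ 2 / N := by
      rw [hdR, hdR, Real.sqrt_div (hqR i).le, Real.sqrt_div (hqR j).le, ← sub_div, div_pow,
        Real.sq_sqrt hNR.le]
    rw [hsd, hdR, hdR, mul_assoc, mul_div_assoc]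
    apply mul_le_mul_of_nonneg_left _ (sq_nonneg _)
    rw [← add_div, ← mul_div_assoc, div_right_comm]
    apply div_le_div_of_nonneg_right _ hNR.le
    change t i j ^ 2 * _ ≤ _ at hs
    linarith
end
end

section
/- Assume δ > 0 and r ∈ ℕ satisfy δ^{1/2} < 1/(8r). Let M be a von Neumann algebra, H a Hilbert M-bimodule, and ξ, η two almost δ-related unit vectors in H. Then there exist r operators c_1,…,c_r ∈ M with ‖c_j‖ ≤ 1 for 1 ≤ j ≤ r such that ‖(Σ_{j=1}^r c_j*c_j − 1)ξ‖² < 12/r, ‖(Σ_{j=1}^r c_j c_j* − 1)η‖² < 12/r, Σ_{j=1}^r ‖c_j ξ − η c_j‖² < 32δ, and Σ_{j=1}^r ‖c_j* η − ξ c_j*‖² < 32δ. -/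
noncomputable section

/-- A Hilbert bimodule over a concrete von Neumann algebra `M ⊆ B(K)`: a complex Hilbert
space `E` together with a unital `*`-homomorphism `L : M → B(E)` (the left action) and a
unital `*`-antihomomorphism `M → B(E)` (the right action, encoded as a unital
`*`-homomorphism `R` on the opposite algebra `Mᵐᵒᵖ`) with commuting ranges. -/
structure HilbertBimodule {K : Type*} [NormedAddCommGroup K] [InnerProductSpace ℂ K]
    [CompleteSpace K] (M : VonNeumannAlgebra K)
    (E : Type*) [NormedAddCommGroup E] [InnerProductSpace ℂ E] [CompleteSpace E] where
  L : M →⋆ₐ[ℂ] (E →L[ℂ] E)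
  R : (↥M)ᵐᵒᵖ →⋆ₐ[ℂ] (E →L[ℂ] E)
  commutes : ∀ (x y : M) (ξ : E),
    L x (R (MulOpposite.op y) ξ) = R (MulOpposite.op y) (L x ξ)

namespace HilbertBimodule

variable {K : Type*} [NormedAddCommGroup K] [InnerProductSpace ℂ K] [CompleteSpace K]
  {M : VonNeumannAlgebra K} {E : Type*} [NormedAddCommGroup E] [InnerProductSpace ℂ E]
  [CompleteSpace E]

/-- The left action `x ξ`. -/
def lsmul (b : HilbertBimodule M E) (x : M) (ξ : E) : E := b.L x ξ

/-- The right action `ξ x`. -/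
def rsmul (b : HilbertBimodule M E) (ξ : E) (x : M) : E := b.R (MulOpposite.op x) ξ

end HilbertBimodule

/-- Two unit vectors in a Hilbert `M`-bimodule are almost `δ`-related. -/
def HilbertBimodule.AlmostRelatedPair {K : Type*} [NormedAddCommGroup K] [InnerProductSpace ℂ K]
    [CompleteSpace K] {M : VonNeumannAlgebra K}
    {E : Type*} [NormedAddCommGroup E] [InnerProductSpace ℂ E] [CompleteSpace E]
    (b : HilbertBimodule M E) (δ : ℝ) (ξ η : E) : Prop :=
  ∀ ε : ℝ, 0 < ε → ∃ (p : ℕ) (a : Fin p → M),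
    ‖b.lsmul (1 - ∑ j, star (a j) * a j) ξ‖ < ε ∧
    ‖b.lsmul (1 - ∑ j, star (a j) * a j) η‖ < ε ∧
    ‖b.rsmul ξ (1 - ∑ j, star (a j) * a j)‖ < ε ∧
    ‖b.rsmul η (1 - ∑ j, star (a j) * a j)‖ < ε ∧
    ‖b.lsmul (1 - ∑ j, a j * star (a j)) ξ‖ < ε ∧
    ‖b.lsmul (1 - ∑ j, a j * star (a j)) η‖ < ε ∧
    ‖b.rsmul ξ (1 - ∑ j, a j * star (a j))‖ < ε ∧
    ‖b.rsmul η (1 - ∑ j, a j * star (a j))‖ < ε ∧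
    (∑ j, ‖b.lsmul (a j) ξ - b.rsmul η (a j)‖ ^ 2) < δ

section Part1

lemma aux_real1 (m x : ℝ) (h0 : 0 ≤ m) (h1 : m ≤ 1)
    (h : m = 1 ∧ x ≤ 1 ∨ m ^ 2 * x = 1 ∧ 1 ≤ x) :
    (1 - m) * (1 - m) ≤ (x - 1) * (x - 1) := by
  rcases h with ⟨h4, h5⟩ | ⟨h4, h5⟩
  · rw [h4]; nlinarith
  · have h6 : 1 ≤ m * x := by nlinarith
    apply mul_self_le_mul_self <;> nlinarith

lemma aux_real2 (m x : ℝ) (h0 : 0 ≤ m) (h1 : m ≤ 1)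
    (h : m = 1 ∧ x ≤ 1 ∨ m ^ 2 * x = 1 ∧ 1 ≤ x) :
    (1 - m) * x * (1 - m) ≤ (x - 1) * (x - 1) := by
  rcases h with ⟨h4, h5⟩ | ⟨h4, h5⟩
  · rw [h4]; nlinarith
  · have h6 : 1 ≤ m * x := by nlinarith
    have h7 : m * x ≤ x := by nlinarith
    have h8 : (1 - m) * x * (1 - m) ≤ (m * x - 1) * (m * x - 1) := by
      have : (m * x - 1) * (m * x - 1) = m ^ 2 * x * x - 2 * (m * x) + 1 := by ring
      rw [this, h4]
      have : (1 - m) * x * (1 - m) = x - 2 * (m * x) + m ^ 2 * x := by ring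
      rw [this, h4]; linarith
    refine h8.trans ?_
    apply mul_self_le_mul_self <;> nlinarith

lemma aux_real3 (m x : ℝ) (h0 : 0 ≤ m) (h1 : m ≤ 1) (hx : 0 ≤ x) : m * x * m ≤ x := by
  have h2 : m * x ≤ x := mul_le_of_le_one_left hx h1
  have h3 : m * x * m ≤ m * x := mul_le_of_le_one_right (by positivity) h1
  linarith

lemma aux_real4 (q : ℝ) (hq : 0 < q) (m x : ℝ) (h0 : 0 ≤ m) (h1 : m ≤ 1)
    (h2 : m * (1 + q * x) = 1) (hx : 0 ≤ x) :
    x - 2 * q * (x * x) ≤ m * x * m := by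
  have h3 : 1 - q * x ≤ m := by nlinarith [mul_nonneg hq.le hx]
  have h4 : 1 - 2 * q * x ≤ m * m := by nlinarith [mul_nonneg hq.le hx, sq_nonneg (1 - m)]
  nlinarith

variable {A : Type*} [CStarAlgebra A] [PartialOrder A] [StarOrderedRing A]

lemma aux_exists_h (T : A) (hT : 0 ≤ T) : ∃ h : A, star h = h ∧ h * h ≤ 1 ∧ h * T * h ≤ 1 ∧
    (1 - h) * (1 - h) ≤ (T - 1) * (T - 1) ∧
    (1 - h) * T * (1 - h) ≤ (T - 1) * (T - 1) ∧
    ((1 - h) * (1 - h)) * ((1 - h) * (1 - h)) ≤ (T - 1) * (T - 1) := by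
  have hs : IsSelfAdjoint T := IsSelfAdjoint.of_nonneg hT
  have hsp : ∀ x : spectrum ℝ T, (0 : ℝ) ≤ x := fun x => spectrum_nonneg_of_nonneg hT x.2
  let X : C(spectrum ℝ T, ℝ) := ⟨fun x => (x : ℝ), continuous_subtype_val⟩
  let m : C(spectrum ℝ T, ℝ) := ⟨fun x => (√(max 1 (x : ℝ)))⁻¹, by
    refine Continuous.inv₀ (by fun_prop) fun x => ?_
    have : 0 < √(max 1 (x : ℝ)) := Real.sqrt_pos.2 (by positivity)
    exact this.ne'⟩
  have hX : cfcHom hs X = T := cfcHom_id hs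
  have key : ∀ x : spectrum ℝ T, 0 ≤ m x ∧ m x ≤ 1 ∧ (m x = 1 ∧ X x ≤ 1 ∨ m x ^ 2 * X x = 1 ∧ 1 ≤ X x) ∧ 0 ≤ X x := by
    intro x
    have hx := hsp x
    have h1 : 1 ≤ √(max 1 (x : ℝ)) := by
      rw [Real.le_sqrt' one_pos]; simp
    refine ⟨by simp only [m, ContinuousMap.coe_mk]; positivity, inv_le_one_of_one_le₀ h1, ?_, hx⟩
    rcases le_total (x : ℝ) 1 with h | h
    · left
      refine ⟨?_, h⟩
      simp only [m, ContinuousMap.coe_mk, max_eq_left h]; simp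
    · right
      refine ⟨?_, h⟩
      simp only [m, X, ContinuousMap.coe_mk, max_eq_right h]
      rw [inv_pow, Real.sq_sqrt hx]
      exact inv_mul_cancel₀ (by positivity)
  refine ⟨cfcHom hs m, ?_, ?_, ?_, ?_, ?_, ?_⟩
  · rw [← map_star]; congr 1
  · have := cfcHom_mono hs (f := m * m) (g := 1) (ContinuousMap.le_def.2 fun x => by
      obtain ⟨h0, h1, h2, h3⟩ := key x
      simp only [ContinuousMap.mul_apply, ContinuousMap.one_apply]
      nlinarith)
    simpa only [map_mul, map_sub, map_one, hX] using this
  · have := cfcHom_mono hs (f := m * X * m) (g := 1) (ContinuousMap.le_def.2 fun x => by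
      obtain ⟨h0, h1, h2, h3⟩ := key x
      simp only [ContinuousMap.mul_apply, ContinuousMap.one_apply]
      rcases h2 with ⟨h4, h5⟩ | ⟨h4, h5⟩
      · rw [h4]; linarith
      · nlinarith)
    simpa only [map_mul, map_sub, map_one, hX] using this
  · have := cfcHom_mono hs (f := (1 - m) * (1 - m)) (g := (X - 1) * (X - 1)) (ContinuousMap.le_def.2 fun x => by
      obtain ⟨h0, h1, h2, h3⟩ := key x
      simp only [ContinuousMap.mul_apply, ContinuousMap.one_apply, ContinuousMap.sub_apply]
      exact aux_real1 _ _ h0 h1 h2)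
    simpa only [map_mul, map_sub, map_one, hX] using this
  · have := cfcHom_mono hs (f := (1 - m) * X * (1 - m)) (g := (X - 1) * (X - 1)) (ContinuousMap.le_def.2 fun x => by
      obtain ⟨h0, h1, h2, h3⟩ := key x
      simp only [ContinuousMap.mul_apply, ContinuousMap.one_apply, ContinuousMap.sub_apply]
      exact aux_real2 _ _ h0 h1 h2)
    simpa only [map_mul, map_sub, map_one, hX] using this
  · have := cfcHom_mono hs (f := ((1 - m) * (1 - m)) * ((1 - m) * (1 - m)))
        (g := (X - 1) * (X - 1)) (ContinuousMap.le_def.2 fun x => by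
      obtain ⟨h0, h1, h2, h3⟩ := key x
      simp only [ContinuousMap.mul_apply, ContinuousMap.one_apply, ContinuousMap.sub_apply]
      refine le_trans ?_ (aux_real1 _ _ h0 h1 h2)
      refine mul_le_of_le_one_left (mul_self_nonneg _) ?_
      nlinarith)
    simpa only [map_mul, map_sub, map_one, hX] using this

lemma aux_exists_G (u : A) (hu : 0 ≤ u) (q : ℝ) (hq : 0 < q) : ∃ G : A, star G = G ∧
    G * (1 + q • u) = 1 ∧ (1 + q • u) * G = 1 ∧ G ≤ 1 ∧
    (4 * q) • (G * u * G) ≤ 1 ∧ G * u * G ≤ u ∧ u - (2 * q) • (u * u) ≤ G * u * G ∧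
    (G * u * G) * (G * u * G) ≤ u * u := by
  have hs : IsSelfAdjoint u := IsSelfAdjoint.of_nonneg hu
  have hsp : ∀ x : spectrum ℝ u, (0 : ℝ) ≤ x := fun x => spectrum_nonneg_of_nonneg hu x.2
  let X : C(spectrum ℝ u, ℝ) := ⟨fun x => (x : ℝ), continuous_subtype_val⟩
  let m : C(spectrum ℝ u, ℝ) := ⟨fun x => (1 + q * (x : ℝ))⁻¹, by
    refine Continuous.inv₀ (by fun_prop) fun x => ?_
    have := hsp x
    positivity⟩
  have hX : cfcHom hs X = u := cfcHom_id hs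
  have key : ∀ x : spectrum ℝ u, 0 ≤ m x ∧ m x ≤ 1 ∧ m x * (1 + q * X x) = 1 ∧ 0 ≤ X x := by
    intro x
    have hx := hsp x
    have h1 : 0 < 1 + q * (x : ℝ) := by positivity
    refine ⟨by simp only [m, ContinuousMap.coe_mk]; positivity, ?_, inv_mul_cancel₀ h1.ne', hx⟩
    refine inv_le_one_of_one_le₀ ?_
    have : 0 ≤ q * (x : ℝ) := by positivity
    linarith
  have hm1 : m * (1 + q • X) = 1 := by
    ext x
    simpa using (key x).2.2.1
  refine ⟨cfcHom hs m, ?_, ?_, ?_, ?_, ?_, ?_, ?_, ?_⟩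
  · rw [← map_star]; congr 1
  · have := congrArg (cfcHom hs) hm1
    simpa only [map_mul, map_add, map_one, map_smul, hX] using this
  · rw [mul_comm] at hm1
    have := congrArg (cfcHom hs) hm1
    simpa only [map_mul, map_add, map_one, map_smul, hX] using this
  · have := cfcHom_mono hs (f := m) (g := 1) (ContinuousMap.le_def.2 fun x => (key x).2.1)
    simpa only [map_mul, map_sub, map_one, hX] using this
  · have := cfcHom_mono hs (f := (4 * q) • (m * X * m)) (g := 1) (ContinuousMap.le_def.2 fun x => by
      obtain ⟨h0, h1, h2, h3⟩ := key x
      simp only [ContinuousMap.mul_apply, ContinuousMap.one_apply, ContinuousMap.smul_apply,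
        smul_eq_mul]
      nlinarith [sq_nonneg (m x * (1 - q * X x)), congrArg (fun t : ℝ => t ^ 2) h2])
    simpa only [map_mul, map_sub, map_one, map_smul, hX] using this
  · have := cfcHom_mono hs (f := m * X * m) (g := X) (ContinuousMap.le_def.2 fun x => by
      obtain ⟨h0, h1, h2, h3⟩ := key x
      simp only [ContinuousMap.mul_apply]
      exact aux_real3 _ _ h0 h1 h3)
    simpa only [map_mul, map_sub, map_one, map_smul, hX] using this
  · have := cfcHom_mono hs (f := X - (2 * q) • (X * X)) (g := m * X * m) (ContinuousMap.le_def.2 fun x => by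
      obtain ⟨h0, h1, h2, h3⟩ := key x
      simp only [ContinuousMap.mul_apply, ContinuousMap.sub_apply, ContinuousMap.smul_apply,
        smul_eq_mul]
      exact aux_real4 q hq _ _ h0 h1 h2 h3)
    simpa only [map_mul, map_sub, map_one, map_smul, hX] using this
  · have := cfcHom_mono hs (f := (m * X * m) * (m * X * m)) (g := X * X) (ContinuousMap.le_def.2 fun x => by
      obtain ⟨h0, h1, h2, h3⟩ := key x
      simp only [ContinuousMap.mul_apply]
      have := aux_real3 _ _ h0 h1 h3
      exact mul_self_le_mul_self (by positivity) this)
    simpa only [map_mul, map_sub, map_one, map_smul, hX] using this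

lemma aux_sq_le (W : A) (h0 : 0 ≤ W) (h1 : W ≤ 1) : W * W ≤ W := by
  have hs : IsSelfAdjoint W := IsSelfAdjoint.of_nonneg h0
  have hsp : ∀ x : spectrum ℝ W, (0 : ℝ) ≤ x := fun x => spectrum_nonneg_of_nonneg h0 x.2
  let X : C(spectrum ℝ W, ℝ) := ⟨fun x => (x : ℝ), continuous_subtype_val⟩
  have hX : cfcHom hs X = W := cfcHom_id hs
  have h2 : ∀ x : spectrum ℝ W, X x ≤ 1 := by
    have : cfcHom hs X ≤ cfcHom hs (1 : C(spectrum ℝ W, ℝ)) := by rw [hX, map_one]; exact h1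
    rw [cfcHom_le_iff] at this
    exact this
  have := cfcHom_mono hs (f := X * X) (g := X) (ContinuousMap.le_def.2 fun x => by
      simp only [ContinuousMap.mul_apply]
      exact mul_le_of_le_one_left (hsp x) (h2 x))
  simpa only [map_mul, map_sub, map_one, map_smul, hX] using this

end Part1

/-- Auxiliary: an algebraic bimodule over a star algebra acting on a Hilbert space. -/
structure AuxBim (A : Type*) [CStarAlgebra A] (E : Type*) [NormedAddCommGroup E]
    [InnerProductSpace ℂ E] [CompleteSpace E] where
  l : A →ₗ[ℂ] (E →L[ℂ] E)
  r : A →ₗ[ℂ] (E →L[ℂ] E)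
  l_one : ∀ ξ, l 1 ξ = ξ
  r_one : ∀ ξ, r 1 ξ = ξ
  l_mul : ∀ x y ξ, l (x * y) ξ = l x (l y ξ)
  r_mul : ∀ x y ξ, r (x * y) ξ = r y (r x ξ)
  l_star : ∀ x, l (star x) = star (l x)
  r_star : ∀ x, r (star x) = star (r x)
  comm : ∀ x y ξ, l x (r y ξ) = r y (l x ξ)

namespace AuxBim
variable {A : Type*} [CStarAlgebra A] {E : Type*} [NormedAddCommGroup E]
    [InnerProductSpace ℂ E] [CompleteSpace E] (B : AuxBim A E)


lemma l_adj (x : A) (ξ η : E) : inner ℂ (B.l x ξ) (η) = inner ℂ (ξ) (B.l (star x) η) := by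
  rw [B.l_star, ContinuousLinearMap.star_eq_adjoint, ContinuousLinearMap.adjoint_inner_right]

lemma r_adj (x : A) (ξ η : E) : inner ℂ (B.r x ξ) (η) = inner ℂ (ξ) (B.r (star x) η) := by
  rw [B.r_star, ContinuousLinearMap.star_eq_adjoint, ContinuousLinearMap.adjoint_inner_right]

/-- Quadratic form of the left action. -/
def ql (ξ : E) : A →ₗ[ℝ] ℝ where
  toFun x := (inner ℂ (ξ) (B.l x ξ)).re
  map_add' x y := by simp [inner_add_right]
  map_smul' t x := by
    rw [← Complex.coe_smul, map_smul]; simp [inner_smul_right]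

/-- Quadratic form of the right action. -/
def qr (ξ : E) : A →ₗ[ℝ] ℝ where
  toFun x := (inner ℂ (ξ) (B.r x ξ)).re
  map_add' x y := by simp [inner_add_right]
  map_smul' t x := by
    rw [← Complex.coe_smul, map_smul]; simp [inner_smul_right]

lemma ql_apply (ξ : E) (x : A) : B.ql ξ x = (inner ℂ (ξ) (B.l x ξ)).re := rfl
lemma qr_apply (ξ : E) (x : A) : B.qr ξ x = (inner ℂ (ξ) (B.r x ξ)).re := rfl

lemma re_self (ξ : E) : (inner ℂ (ξ) (ξ)).re = ‖ξ‖ ^ 2 := inner_self_eq_norm_sq (𝕜 := ℂ) ξ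

lemma l_norm_sq (x : A) (ξ : E) : ‖B.l x ξ‖ ^ 2 = B.ql ξ (star x * x) := by
  rw [ql_apply, B.l_mul, ← B.l_adj, re_self]

lemma r_norm_sq (x : A) (ξ : E) : ‖B.r x ξ‖ ^ 2 = B.qr ξ (x * star x) := by
  rw [qr_apply, B.r_mul, ← B.r_adj, re_self]

lemma ql_one (ξ : E) : B.ql ξ 1 = ‖ξ‖ ^ 2 := by
  rw [ql_apply, B.l_one, re_self]

lemma qr_one (ξ : E) : B.qr ξ 1 = ‖ξ‖ ^ 2 := by
  rw [qr_apply, B.r_one, re_self]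

variable [PartialOrder A] [StarOrderedRing A]

lemma ql_mono (ξ : E) {x y : A} (h : x ≤ y) : B.ql ξ x ≤ B.ql ξ y := by
  rw [← sub_nonneg, CStarAlgebra.nonneg_iff_eq_star_mul_self] at h
  obtain ⟨z, hz⟩ := h
  have : B.ql ξ (y - x) = ‖B.l z ξ‖ ^ 2 := by rw [l_norm_sq, hz]
  rw [map_sub] at this
  nlinarith [sq_nonneg ‖B.l z ξ‖]

lemma qr_mono (ξ : E) {x y : A} (h : x ≤ y) : B.qr ξ x ≤ B.qr ξ y := by
  rw [← sub_nonneg, CStarAlgebra.nonneg_iff_eq_star_mul_self] at h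
  obtain ⟨z, hz⟩ := h
  have : B.qr ξ (y - x) = ‖B.r (star z) ξ‖ ^ 2 := by rw [r_norm_sq, hz, star_star]
  rw [map_sub] at this
  nlinarith [sq_nonneg ‖B.r (star z) ξ‖]

/-- row contraction -/
lemma row_contr (X Y : A) (hXY : X * star X + Y * star Y ≤ 1) (x y : E) :
    ‖B.l X x - B.l Y y‖ ^ 2 ≤ ‖x‖ ^ 2 + ‖y‖ ^ 2 := by
  set z := B.l X x - B.l Y y with hz
  have h1 : ‖B.l (star X) z‖ ^ 2 + ‖B.l (star Y) z‖ ^ 2 ≤ ‖z‖ ^ 2 := by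
    rw [l_norm_sq, l_norm_sq, ← map_add, star_star, star_star, ← B.ql_one]
    exact B.ql_mono z hXY
  have h2 : (inner ℂ (x) (B.l (star X) z)).re - (inner ℂ (y) (B.l (star Y) z)).re = ‖z‖ ^ 2 := by
    rw [← l_adj, ← l_adj, ← Complex.sub_re, ← inner_sub_left, ← hz, re_self]
  have h3 := norm_sub_sq (𝕜 := ℂ) x (B.l (star X) z)
  have h4 := norm_add_sq (𝕜 := ℂ) y (B.l (star Y) z)
  simp only [RCLike.re_to_complex] at h3 h4
  nlinarith [sq_nonneg ‖x - B.l (star X) z‖, sq_nonneg ‖y + B.l (star Y) z‖]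

end AuxBim

section trunc
variable {A : Type*} [CStarAlgebra A] [PartialOrder A] [StarOrderedRing A]

lemma aux_trunc (b : A) (q : ℝ) (hq : 0 < q) : ∃ F G G' : A, star G = G ∧ star G' = G' ∧
    F = b * G ∧ F = G' * b ∧ (1 + q • (star b * b)) * G = 1 ∧ G' * (1 + q • (b * star b)) = 1 ∧
    (1 + q • (b * star b)) * G' = 1 ∧ G * (1 + q • (star b * b)) = 1 ∧
    G ≤ 1 ∧ G' ≤ 1 ∧
    (4 * q) • (star F * F) ≤ 1 ∧
    star F * F ≤ star b * b ∧ F * star F ≤ b * star b ∧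
    star b * b - (2 * q) • ((star b * b) * (star b * b)) ≤ star F * F ∧
    b * star b - (2 * q) • ((b * star b) * (b * star b)) ≤ F * star F ∧
    (star F * F) * (star F * F) ≤ (star b * b) * (star b * b) ∧
    (F * star F) * (F * star F) ≤ (b * star b) * (b * star b) := by
  obtain ⟨G, g1, g2, g3, g4, g5, g6, g7, g8⟩ := aux_exists_G (star b * b) (star_mul_self_nonneg b) q hq
  obtain ⟨G', k1, k2, k3, k4, k5, k6, k7, k8⟩ := aux_exists_G (b * star b) (mul_star_self_nonneg b) q hq
  have e : b * G = G' * b := by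
    calc b * G = (G' * (1 + q • (b * star b))) * (b * G) := by rw [k2, one_mul]
      _ = G' * b * ((1 + q • (star b * b)) * G) := by
        simp only [mul_assoc, add_mul, mul_add, one_mul, smul_mul_assoc, mul_smul_comm]
      _ = G' * b := by rw [g3, mul_one]
  have e1 : star (b * G) * (b * G) = G * (star b * b) * G := by
    rw [star_mul, g1]; simp only [mul_assoc]
  have e2 : (b * G) * star (b * G) = G' * (b * star b) * G' := by
    rw [e, star_mul, k1]; simp only [mul_assoc]
  refine ⟨b * G, G, G', g1, k1, rfl, e, g3, k2, k3, g2, g4, k4, ?_⟩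
  rw [e1, e2]
  exact ⟨g5, g6, k6, g7, k7, g8, k8⟩

lemma AuxBim.comm_id {E : Type*} [NormedAddCommGroup E]
    [InnerProductSpace ℂ E] [CompleteSpace E] (B : AuxBim A E) (b b' F G G' : A) (s : ℝ)
    (hF : F = b * G) (hF' : F = G' * b)
    (h1 : G + s ^ 2 • (b' * F) = 1) (h2 : G' + s ^ 2 • (F * b') = 1) (ξ η : E) :
    B.l F ξ - B.r F η = B.l G' (B.r G (B.l b ξ - B.r b η)) -
      B.l (s • F) (B.r (s • F) (B.l b' η - B.r b' ξ)) := by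
  have hs : ∀ v, B.l (s • F) (B.r (s • F) v) = ((s : ℂ) ^ 2) • B.l F (B.r F v) := by
    intro v
    rw [← Complex.coe_smul, map_smul, map_smul]
    simp [pow_two, mul_smul]
  have e1 : B.l G' (B.r G (B.l b ξ)) = B.l F (B.r G ξ) := by
    rw [← B.comm, ← B.l_mul, ← hF']
  have e2 : B.l G' (B.r G (B.r b η)) = B.r F (B.l G' η) := by
    rw [← B.r_mul, ← hF, B.comm]
  have e3 : B.l F (B.r F (B.l b' η)) = B.r F (B.l (F * b') η) := by
    rw [B.comm, ← B.l_mul]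
  have e4 : B.l F (B.r F (B.r b' ξ)) = B.l F (B.r (b' * F) ξ) := by
    rw [← B.r_mul]
  have e5 : ξ = B.r G ξ + ((s : ℂ) ^ 2) • B.r (b' * F) ξ := by
    conv_lhs => rw [← B.r_one ξ, ← h1, ← Complex.coe_smul]
    simp
  have e6 : η = B.l G' η + ((s : ℂ) ^ 2) • B.l (F * b') η := by
    conv_lhs => rw [← B.l_one η, ← h2, ← Complex.coe_smul]
    simp
  have e7 : B.l F ξ = B.l F (B.r G ξ) + ((s : ℂ) ^ 2) • B.l F (B.r (b' * F) ξ) := by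
    conv_lhs => rw [e5]
    simp
  have e8 : B.r F η = B.r F (B.l G' η) + ((s : ℂ) ^ 2) • B.r F (B.l (F * b') η) := by
    conv_lhs => rw [e6]
    simp
  rw [hs, map_sub, map_sub, map_sub, map_sub, e1, e2, e3, e4, e7, e8, smul_sub]
  abel

lemma AuxBim.trunc_comm {E : Type*} [NormedAddCommGroup E]
    [InnerProductSpace ℂ E] [CompleteSpace E] (B : AuxBim A E) (b F G G' : A) (s : ℝ)
    (hG : star G = G) (hG' : star G' = G') (hF : F = b * G) (hF' : F = G' * b)
    (h1 : (1 + s ^ 2 • (star b * b)) * G = 1) (h2 : G' * (1 + s ^ 2 • (b * star b)) = 1)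
    (h3 : (1 + s ^ 2 • (b * star b)) * G' = 1) (h4 : G * (1 + s ^ 2 • (star b * b)) = 1)
    (hG1 : G ≤ 1) (hG1' : G' ≤ 1) (ξ η : E) :
    ‖B.l F ξ - B.r F η‖ ^ 2 + ‖B.l (star F) η - B.r (star F) ξ‖ ^ 2 ≤
    ‖B.l b ξ - B.r b η‖ ^ 2 + ‖B.l (star b) η - B.r (star b) ξ‖ ^ 2 := by
  have sF : star F = star b * G' := by rw [hF', star_mul, hG']
  have sF' : star F = G * star b := by rw [hF, star_mul, hG]
  have c1 : G * star G + (s • star F) * star (s • star F) = G := by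
    calc _ = G * ((1 + s ^ 2 • (star b * b)) * G) := by
          rw [star_smul, star_star, hG, sF', hF]
          simp only [star_trivial, smul_mul_assoc, mul_smul_comm, smul_smul, add_mul, mul_add, one_mul, mul_assoc, pow_two]
      _ = G := by rw [h1, mul_one]
  have c2 : G' * star G' + (s • F) * star (s • F) = G' := by
    calc _ = G' * ((1 + s ^ 2 • (b * star b)) * G') := by
          rw [star_smul, hG', sF, hF']
          simp only [star_trivial, smul_mul_assoc, mul_smul_comm, smul_smul, add_mul, mul_add, one_mul, mul_assoc, pow_two]
      _ = G' := by rw [h3, mul_one]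
  set u := B.l b ξ - B.r b η with hu
  set v := B.l (star b) η - B.r (star b) ξ with hv
  have i1 : B.l F ξ - B.r F η = B.l G' (B.r G u) - B.l (s • F) (B.r (s • F) v) := by
    refine B.comm_id b (star b) F G G' s hF hF' ?_ ?_ ξ η
    · rw [← h1, hF, add_mul, one_mul, smul_mul_assoc, mul_assoc]
    · rw [← h2, hF', mul_add, mul_one, mul_smul_comm, mul_assoc]
  have i2 : B.l (star F) η - B.r (star F) ξ = B.l G (B.r G' v) - B.l (s • star F) (B.r (s • star F) u) := by
    refine B.comm_id (star b) b (star F) G' G s sF sF' ?_ ?_ η ξ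
    · rw [← h3, sF, add_mul, one_mul, smul_mul_assoc, mul_assoc]
    · rw [← h4, sF', mul_add, mul_one, mul_smul_comm, mul_assoc]
  have n1 := B.row_contr G' (s • F) (by rw [c2]; exact hG1') (B.r G u) (B.r (s • F) v)
  have n2 := B.row_contr G (s • star F) (by rw [c1]; exact hG1) (B.r G' v) (B.r (s • star F) u)
  rw [← i1] at n1
  rw [← i2] at n2
  have m1 : ‖B.r G u‖ ^ 2 + ‖B.r (s • star F) u‖ ^ 2 ≤ ‖u‖ ^ 2 := by
    rw [B.r_norm_sq, B.r_norm_sq, ← map_add, c1, ← B.qr_one]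
    exact B.qr_mono u hG1
  have m2 : ‖B.r G' v‖ ^ 2 + ‖B.r (s • F) v‖ ^ 2 ≤ ‖v‖ ^ 2 := by
    rw [B.r_norm_sq, B.r_norm_sq, ← map_add, c2, ← B.qr_one]
    exact B.qr_mono v hG1'
  linarith
end trunc

section rad
variable {A : Type*} [CStarAlgebra A] [PartialOrder A] [StarOrderedRing A]

lemma aux_four (β a : A) :
    (star (β + a) * (β + a)) * (star (β + a) * (β + a)) +
      (star (β - a) * (β - a)) * (star (β - a) * (β - a)) ≤
    (2 : ℝ) • ((star β * β) * (star β * β) + (star β * β) * (star a * a) +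
      (star a * a) * (star β * β) + (star a * a) * (star a * a) +
      (2 : ℝ) • (star β * (a * star a) * β + star a * (β * star β) * a)) := by
  rw [← sub_nonneg]
  have h : 0 ≤ (2 : ℝ) • (star (star β * a - star a * β) * (star β * a - star a * β)) :=
    smul_nonneg (by norm_num) (star_mul_self_nonneg _)
  refine h.trans_eq ?_
  simp only [star_add, star_sub, star_mul, star_star, two_smul]
  noncomm_ring

lemma aux_rad {E : Type*} [NormedAddCommGroup E] [InnerProductSpace ℂ E] (p : ℕ) :
    ∀ (a : Fin p → A), ∃ (n : ℕ) (b : Fin n → A), 0 < n ∧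
    (∀ x, ∑ w, star (b w) * x * b w = (n : ℝ) • ∑ j, star (a j) * x * a j) ∧
    (∀ x, ∑ w, b w * x * star (b w) = (n : ℝ) • ∑ j, a j * x * star (a j)) ∧
    (∑ w, (star (b w) * b w) * (star (b w) * b w) ≤
      (n : ℝ) • ((∑ j, star (a j) * a j) * (∑ j, star (a j) * a j) +
        (2 : ℝ) • ∑ j, star (a j) * (∑ i, a i * star (a i)) * a j)) ∧
    (∑ w, (b w * star (b w)) * (b w * star (b w)) ≤
      (n : ℝ) • ((∑ j, a j * star (a j)) * (∑ j, a j * star (a j)) +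
        (2 : ℝ) • ∑ j, a j * (∑ i, star (a i) * a i) * star (a j))) ∧
    (∀ φ : A →+ E, ∑ w, ‖φ (b w)‖ ^ 2 = n * ∑ j, ‖φ (a j)‖ ^ 2) := by
  induction p with
  | zero =>
    intro a
    refine ⟨1, fun _ => 0, one_pos, ?_⟩
    simp
  | succ p ih =>
    intro a
    obtain ⟨n, b, hn, h1, h2, h3, h4, h5⟩ := ih (fun j => a j.succ)
    refine ⟨n + n, Fin.append (fun w => b w + a 0) (fun w => b w - a 0), by omega, ?_, ?_, ?_, ?_, ?_⟩
    · intro x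
      rw [Fin.sum_univ_add, Fin.sum_univ_succ]
      simp only [Fin.append_left, Fin.append_right]
      rw [← Finset.sum_add_distrib]
      have : ∀ w, star (b w + a 0) * x * (b w + a 0) + star (b w - a 0) * x * (b w - a 0) =
          (2 : ℝ) • (star (b w) * x * b w + star (a 0) * x * a 0) := by
        intro w
        simp only [star_add, star_sub, two_smul]
        noncomm_ring
      rw [Finset.sum_congr rfl fun w _ => this w, ← Finset.smul_sum, Finset.sum_add_distrib, h1,
        Finset.sum_const, Finset.card_univ, Fintype.card_fin, ← Nat.cast_smul_eq_nsmul ℝ]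
      push_cast
      module
    · intro x
      rw [Fin.sum_univ_add, Fin.sum_univ_succ]
      simp only [Fin.append_left, Fin.append_right]
      rw [← Finset.sum_add_distrib]
      have : ∀ w, (b w + a 0) * x * star (b w + a 0) + (b w - a 0) * x * star (b w - a 0) =
          (2 : ℝ) • (b w * x * star (b w) + a 0 * x * star (a 0)) := by
        intro w
        simp only [star_add, star_sub, two_smul]
        noncomm_ring
      rw [Finset.sum_congr rfl fun w _ => this w, ← Finset.smul_sum, Finset.sum_add_distrib, h2,
        Finset.sum_const, Finset.card_univ, Fintype.card_fin, ← Nat.cast_smul_eq_nsmul ℝ]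
      push_cast
      module
    · rw [Fin.sum_univ_add]
      simp only [Fin.append_left, Fin.append_right]
      rw [← Finset.sum_add_distrib]
      refine (Finset.sum_le_sum fun w _ => aux_four (b w) (a 0)).trans ?_
      have k1 := h1 1
      have k2 := h2 1
      simp only [mul_one] at k1 k2
      have s1 : ∑ w, star (b w) * b w * (star (a 0) * a 0) =
          ((n : ℝ) • ∑ j : Fin p, star (a j.succ) * a j.succ) * (star (a 0) * a 0) := by rw [← Finset.sum_mul, k1]
      have s2 : ∑ w, star (a 0) * a 0 * (star (b w) * b w) =
          star (a 0) * a 0 * ((n : ℝ) • ∑ j : Fin p, star (a j.succ) * a j.succ) := by rw [← Finset.mul_sum, k1]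
      have s3 : ∑ w, star (a 0) * (b w * star (b w)) * a 0 =
          star (a 0) * ((n : ℝ) • ∑ j : Fin p, a j.succ * star (a j.succ)) * a 0 := by rw [← Finset.sum_mul, ← Finset.mul_sum, k2]
      simp only [Fin.sum_univ_succ (n := p)]
      rw [← Finset.smul_sum, Finset.sum_add_distrib, Finset.sum_add_distrib,
        Finset.sum_add_distrib, Finset.sum_add_distrib, ← Finset.smul_sum,
        Finset.sum_add_distrib, s1, s2, s3, h1,
        Finset.sum_const, Finset.card_univ, Fintype.card_fin, ← Nat.cast_smul_eq_nsmul ℝ]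
      have k3 : 0 ≤ (4 * n : ℝ) • (star (a 0) * a 0 * star (star (a 0) * a 0)) :=
        smul_nonneg (by positivity) (mul_star_self_nonneg _)
      have k4 := smul_le_smul_of_nonneg_left h3 (zero_le_two : (0 : ℝ) ≤ 2)
      have k5 := add_le_add k4 k3
      rw [← sub_nonneg] at k5 ⊢
      refine k5.trans_eq ?_
      simp only [mul_add, add_mul, Finset.sum_add_distrib, star_mul, star_star, smul_mul_assoc, mul_smul_comm, mul_assoc]
      push_cast
      module
    · rw [Fin.sum_univ_add]
      simp only [Fin.append_left, Fin.append_right]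
      rw [← Finset.sum_add_distrib]
      have h4' : ∀ w, (b w + a 0) * star (b w + a 0) * ((b w + a 0) * star (b w + a 0)) +
        (b w - a 0) * star (b w - a 0) * ((b w - a 0) * star (b w - a 0)) ≤ 
        (2 : ℝ) • ((b w * star (b w)) * (b w * star (b w)) + (b w * star (b w)) * (a 0 * star (a 0)) +
      (a 0 * star (a 0)) * (b w * star (b w)) + (a 0 * star (a 0)) * (a 0 * star (a 0)) +
      (2 : ℝ) • (b w * (star (a 0) * a 0) * star (b w) + a 0 * (star (b w) * b w) * star (a 0))) := by
        intro w
        have := aux_four (star (b w)) (star (a 0))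
        simpa only [← star_add, ← star_sub, star_star] using this
      refine (Finset.sum_le_sum fun w _ => h4' w).trans ?_
      have k1 := h1 1
      have k2 := h2 1
      simp only [mul_one] at k1 k2
      have s1 : ∑ w, b w * star (b w) * (a 0 * star (a 0)) =
          ((n : ℝ) • ∑ j : Fin p, a j.succ * star (a j.succ)) * (a 0 * star (a 0)) := by rw [← Finset.sum_mul, k2]
      have s2 : ∑ w, a 0 * star (a 0) * (b w * star (b w)) =
          a 0 * star (a 0) * ((n : ℝ) • ∑ j : Fin p, a j.succ * star (a j.succ)) := by rw [← Finset.mul_sum, k2]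
      have s3 : ∑ w, a 0 * (star (b w) * b w) * star (a 0) =
          a 0 * ((n : ℝ) • ∑ j : Fin p, star (a j.succ) * a j.succ) * star (a 0) := by rw [← Finset.sum_mul, ← Finset.mul_sum, k1]
      simp only [Fin.sum_univ_succ (n := p)]
      rw [← Finset.smul_sum, Finset.sum_add_distrib, Finset.sum_add_distrib,
        Finset.sum_add_distrib, Finset.sum_add_distrib, ← Finset.smul_sum,
        Finset.sum_add_distrib, s1, s2, s3, h2,
        Finset.sum_const, Finset.card_univ, Fintype.card_fin, ← Nat.cast_smul_eq_nsmul ℝ]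
      have k3 : 0 ≤ (4 * n : ℝ) • (a 0 * star (a 0) * star (a 0 * star (a 0))) :=
        smul_nonneg (by positivity) (mul_star_self_nonneg _)
      have k4 := smul_le_smul_of_nonneg_left h4 (zero_le_two : (0 : ℝ) ≤ 2)
      have k5 := add_le_add k4 k3
      rw [← sub_nonneg] at k5 ⊢
      refine k5.trans_eq ?_
      simp only [mul_add, add_mul, Finset.sum_add_distrib, star_mul, star_star, smul_mul_assoc, mul_smul_comm, mul_assoc]
      push_cast
      module
    · intro φ
      rw [Fin.sum_univ_add, Fin.sum_univ_succ]
      simp only [Fin.append_left, Fin.append_right]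
      rw [← Finset.sum_add_distrib]
      have : ∀ w, ‖φ (b w + a 0)‖ ^ 2 + ‖φ (b w - a 0)‖ ^ 2 =
          2 * (‖φ (b w)‖ ^ 2 + ‖φ (a 0)‖ ^ 2) := by
        intro w
        rw [map_add, map_sub]
        have := parallelogram_law_with_norm ℂ (φ (b w)) (φ (a 0))
        nlinarith
      rw [Finset.sum_congr rfl fun w _ => this w, ← Finset.mul_sum, Finset.sum_add_distrib, h5]
      simp
      ring

/-- Greedy choice of samples. -/
lemma aux_greedy {E : Type*} [NormedAddCommGroup E] [InnerProductSpace ℂ E] (n : ℕ) (hn : 0 < n)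
    (X Y : Fin n → E) (g : Fin n → ℝ) (hX : ∑ w, X w = 0) (hY : ∑ w, Y w = 0) (v w : E)
    (V : ℝ) (hV : ∑ i, (‖X i‖ ^ 2 + ‖Y i‖ ^ 2 + g i) ≤ n * V) (r : ℕ) :
    ∃ c : Fin r → Fin n, ‖v + ∑ l, X (c l)‖ ^ 2 + ‖w + ∑ l, Y (c l)‖ ^ 2 + ∑ l, g (c l) ≤
      ‖v‖ ^ 2 + ‖w‖ ^ 2 + r * V := by
  induction r with
  | zero => exact ⟨Fin.elim0, by simp⟩
  | succ r ih =>
    obtain ⟨c, hc⟩ := ih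
    obtain ⟨v', hv'⟩ : ∃ v', v' = v + ∑ l, X (c l) := ⟨_, rfl⟩
    obtain ⟨w', hw'⟩ : ∃ w', w' = w + ∑ l, Y (c l) := ⟨_, rfl⟩
    rw [← hv', ← hw'] at hc
    have key : ∑ i, (‖v' + X i‖ ^ 2 + ‖w' + Y i‖ ^ 2 + g i) ≤
        ∑ i : Fin n, (‖v'‖ ^ 2 + ‖w'‖ ^ 2 + V) := by
      have e : ∀ i, ‖v' + X i‖ ^ 2 + ‖w' + Y i‖ ^ 2 + g i =
          (‖v'‖ ^ 2 + ‖w'‖ ^ 2) + 2 * (RCLike.re (inner ℂ v' (X i)) + RCLike.re (inner ℂ w' (Y i)))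
            + (‖X i‖ ^ 2 + ‖Y i‖ ^ 2 + g i) := by
        intro i
        rw [norm_add_sq (𝕜 := ℂ) v', norm_add_sq (𝕜 := ℂ) w']; ring
      have z1 : ∑ i, RCLike.re (inner ℂ v' (X i)) = 0 := by
        rw [← map_sum, ← inner_sum, hX]; simp
      have z2 : ∑ i, RCLike.re (inner ℂ w' (Y i)) = 0 := by
        rw [← map_sum, ← inner_sum, hY]; simp
      rw [Finset.sum_congr rfl fun i _ => e i, Finset.sum_add_distrib, Finset.sum_add_distrib,
        ← Finset.mul_sum, Finset.sum_add_distrib (f := fun i => RCLike.re (inner ℂ v' (X i))),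
        z1, z2]
      simp
      linarith
    haveI : Nonempty (Fin n) := ⟨⟨0, hn⟩⟩
    obtain ⟨i, -, hi⟩ := Finset.exists_le_of_sum_le Finset.univ_nonempty key
    refine ⟨Fin.snoc c i, ?_⟩
    simp only [Fin.sum_univ_castSucc, Fin.snoc_castSucc, Fin.snoc_last, ← add_assoc, ← hv', ← hw']
    push_cast
    linarith
end rad

lemma aux_le_of_sq {x y : ℝ} (h : x ^ 2 ≤ y ^ 2) (hy : 0 ≤ y) : x ≤ y := abs_le_of_sq_le_sq' h hy |>.2

section norml
variable {E : Type*} [NormedAddCommGroup E] [InnerProductSpace ℂ E]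

/-- Square-sum norm of a finite family. -/
def auxN {p : ℕ} (v : Fin p → E) : ℝ := √(∑ j, ‖v j‖ ^ 2)

lemma auxN_eq {p : ℕ} (v : Fin p → E) :
    auxN v = ‖(WithLp.toLp 2 v : PiLp 2 (fun _ : Fin p => E))‖ := by
  rw [PiLp.norm_eq_of_L2, auxN]

lemma auxN_add {p : ℕ} (v w : Fin p → E) : auxN (fun j => v j + w j) ≤ auxN v + auxN w := by
  rw [auxN_eq, auxN_eq, auxN_eq]
  exact norm_add_le (WithLp.toLp 2 v : PiLp 2 (fun _ : Fin p => E)) (WithLp.toLp 2 w)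

lemma auxN_sub {p : ℕ} (v w : Fin p → E) : auxN (fun j => v j - w j) ≤ auxN v + auxN w := by
  rw [auxN_eq, auxN_eq, auxN_eq]
  exact norm_sub_le (WithLp.toLp 2 v : PiLp 2 (fun _ : Fin p => E)) (WithLp.toLp 2 w)

lemma auxN_le {p : ℕ} (v : Fin p → E) (t : ℝ) (ht : 0 ≤ t) (h : ∑ j, ‖v j‖ ^ 2 ≤ t ^ 2) :
    auxN v ≤ t := (Real.sqrt_le_left ht).2 h

lemma auxN_mono {p : ℕ} (v w : Fin p → E) (h : ∀ j, ‖v j‖ ≤ ‖w j‖) : auxN v ≤ auxN w :=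
  Real.sqrt_le_sqrt (Finset.sum_le_sum fun j _ => pow_le_pow_left₀ (norm_nonneg _) (h j) 2)

lemma auxN_sq {p : ℕ} (v : Fin p → E) : auxN v ^ 2 = ∑ j, ‖v j‖ ^ 2 :=
  Real.sq_sqrt (by positivity)

variable {A : Type*} [CStarAlgebra A] [PartialOrder A] [StarOrderedRing A] [CompleteSpace E]

lemma AuxBim.l_contr (B : AuxBim A E) (h : A) (hs : star h = h) (hh : h * h ≤ 1) (x : E) :
    ‖B.l h x‖ ≤ ‖x‖ := by
  refine aux_le_of_sq ?_ (norm_nonneg _)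
  rw [B.l_norm_sq, hs, ← B.ql_one]
  exact B.ql_mono x hh

lemma AuxBim.r_contr (B : AuxBim A E) (h : A) (hs : star h = h) (hh : h * h ≤ 1) (x : E) :
    ‖B.r h x‖ ≤ ‖x‖ := by
  refine aux_le_of_sq ?_ (norm_nonneg _)
  rw [B.r_norm_sq, hs, ← B.qr_one]
  exact B.qr_mono x hh

lemma AuxBim.normalize (B : AuxBim A E) {p : ℕ} (a : Fin p → A) (S T h k : A)
    (hS : S = ∑ j, star (a j) * a j) (hT : T = ∑ j, a j * star (a j))
    (ξ η : E) (hξ : ‖ξ‖ = 1) (hη : ‖η‖ = 1) (ε τ D : ℝ) (hε : 0 < ε) (hε1 : ε ≤ 1) (hετ : ε ≤ τ)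
    (hετ2 : 2 * ε ≤ τ ^ 2) (hD : 0 ≤ D)
    (sh : star h = h) (sk : star k = k) (hh : h * h ≤ 1) (kk : k * k ≤ 1)
    (h2 : (1 - h) * T * (1 - h) ≤ (T - 1) * (T - 1))
    (h3 : ((1 - h) * (1 - h)) * ((1 - h) * (1 - h)) ≤ (T - 1) * (T - 1))
    (k2 : (1 - k) * S * (1 - k) ≤ (S - 1) * (S - 1))
    (k3 : ((1 - k) * (1 - k)) * ((1 - k) * (1 - k)) ≤ (S - 1) * (S - 1))
    (b1 : ‖B.l (1 - S) ξ‖ ≤ ε) (b2 : ‖B.r (1 - S) ξ‖ ≤ ε)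
    (b3 : ‖B.l (1 - T) η‖ ≤ ε) (b4 : ‖B.r (1 - T) η‖ ≤ ε)
    (hd : ∑ j, ‖B.l (a j) ξ - B.r (a j) η‖ ^ 2 ≤ D ^ 2) :
    auxN (fun j => B.l (h * a j * k) ξ - B.r (h * a j * k) η) ≤ D + 4 * τ ∧
    1 - D - 3 * τ ≤ auxN (fun j => B.l (h * a j * k) ξ) := by
  have hτ : 0 ≤ τ := hε.le.trans hετ
  have sS : star S = S := by rw [hS, star_sum]; simp
  have sT : star T = T := by rw [hT, star_sum]; simp
  have sh1 : star (1 - h) = 1 - h := by rw [star_sub, star_one, sh]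
  have sk1 : star (1 - k) = 1 - k := by rw [star_sub, star_one, sk]
  have sqS : star (1 - S) * (1 - S) = (S - 1) * (S - 1) := by
    rw [star_sub, star_one, sS]; noncomm_ring
  have sqT : star (1 - T) * (1 - T) = (T - 1) * (T - 1) := by
    rw [star_sub, star_one, sT]; noncomm_ring
  have sqS' : (1 - S) * star (1 - S) = (S - 1) * (S - 1) := by
    rw [star_sub, star_one, sS]; noncomm_ring
  have sqT' : (1 - T) * star (1 - T) = (T - 1) * (T - 1) := by
    rw [star_sub, star_one, sT]; noncomm_ring
  have hSb : ∑ j, star (a j) * (h * h) * a j ≤ S := by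
    rw [hS]
    refine Finset.sum_le_sum fun j _ => ?_
    simpa using star_left_conjugate_le_conjugate hh (a j)
  have hTb : ∑ j, a j * (k * k) * star (a j) ≤ T := by
    rw [hT]
    refine Finset.sum_le_sum fun j _ => ?_
    simpa using star_right_conjugate_le_conjugate kk (a j)
  -- e1
  have e1 : auxN (fun j => B.l (h * a j * (1 - k)) ξ) ≤ ε := by
    refine auxN_le _ _ hε.le ?_
    calc ∑ j, ‖B.l (h * a j * (1 - k)) ξ‖ ^ 2
        = B.ql ξ ((1 - k) * (∑ j, star (a j) * (h * h) * a j) * (1 - k)) := by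
          rw [Finset.mul_sum, Finset.sum_mul, map_sum]
          refine Finset.sum_congr rfl fun j _ => ?_
          rw [B.l_norm_sq, star_mul, star_mul, sh, sk1]
          simp only [mul_assoc]
      _ ≤ B.ql ξ ((1 - k) * S * (1 - k)) := by
          refine B.ql_mono ξ ?_
          have := star_left_conjugate_le_conjugate hSb (1 - k)
          rwa [sk1] at this
      _ ≤ B.ql ξ ((S - 1) * (S - 1)) := B.ql_mono ξ k2
      _ = ‖B.l (1 - S) ξ‖ ^ 2 := by rw [B.l_norm_sq, sqS]
      _ ≤ ε ^ 2 := pow_le_pow_left₀ (norm_nonneg _) b1 2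
  have e2 : auxN (fun j => B.r ((1 - h) * a j * k) η) ≤ ε := by
    refine auxN_le _ _ hε.le ?_
    calc ∑ j, ‖B.r ((1 - h) * a j * k) η‖ ^ 2
        = B.qr η ((1 - h) * (∑ j, a j * (k * k) * star (a j)) * (1 - h)) := by
          rw [Finset.mul_sum, Finset.sum_mul, map_sum]
          refine Finset.sum_congr rfl fun j _ => ?_
          rw [B.r_norm_sq, star_mul, star_mul, sk, sh1]
          simp only [mul_assoc]
      _ ≤ B.qr η ((1 - h) * T * (1 - h)) := by
          refine B.qr_mono η ?_
          have := star_left_conjugate_le_conjugate hTb (1 - h)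
          rwa [sh1] at this
      _ ≤ B.qr η ((T - 1) * (T - 1)) := B.qr_mono η h2
      _ = ‖B.r (1 - T) η‖ ^ 2 := by rw [B.r_norm_sq, sqT']
      _ ≤ ε ^ 2 := pow_le_pow_left₀ (norm_nonneg _) b4 2
  have nT : ‖B.r T η‖ ≤ 1 + ε := by
    have : B.r T η = η - B.r (1 - T) η := by
      rw [map_sub, ContinuousLinearMap.sub_apply, B.r_one]; abel
    rw [this]
    refine (norm_sub_le _ _).trans ?_
    rw [hη]; linarith
  have nS : ‖B.l S ξ‖ ≤ 1 + ε := by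
    have : B.l S ξ = ξ - B.l (1 - S) ξ := by
      rw [map_sub, ContinuousLinearMap.sub_apply, B.l_one]; abel
    rw [this]
    refine (norm_sub_le _ _).trans ?_
    rw [hξ]; linarith
  have e3 : auxN (fun j => B.l (1 - h) (B.r (a j) η)) ≤ τ := by
    refine auxN_le _ _ hτ ?_
    calc ∑ j, ‖B.l (1 - h) (B.r (a j) η)‖ ^ 2
        = B.qr (B.l (1 - h) η) T := by
          rw [hT, map_sum]
          refine Finset.sum_congr rfl fun j _ => ?_
          rw [B.comm, B.r_norm_sq]
      _ = (inner ℂ (B.l ((1 - h) * (1 - h)) η) (B.r T η)).re := by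
          rw [B.qr_apply, ← B.comm, B.l_mul, B.l_adj (1 - h) (B.l (1 - h) η), sh1]
      _ ≤ ‖B.l ((1 - h) * (1 - h)) η‖ * ‖B.r T η‖ :=
          (Complex.re_le_norm _).trans (norm_inner_le_norm _ _)
      _ ≤ ε * (1 + ε) := by
          refine mul_le_mul ?_ nT (norm_nonneg _) hε.le
          refine le_trans ?_ b3
          refine aux_le_of_sq ?_ (norm_nonneg _)
          rw [B.l_norm_sq, B.l_norm_sq, sqT, star_mul, sh1]
          exact B.ql_mono η h3
      _ ≤ τ ^ 2 := by nlinarith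
  have e4 : auxN (fun j => B.l (h * a j) (B.r (1 - k) ξ)) ≤ τ := by
    refine auxN_le _ _ hτ ?_
    calc ∑ j, ‖B.l (h * a j) (B.r (1 - k) ξ)‖ ^ 2
        = B.ql (B.r (1 - k) ξ) (∑ j, star (a j) * (h * h) * a j) := by
          rw [map_sum]
          refine Finset.sum_congr rfl fun j _ => ?_
          rw [B.l_norm_sq, star_mul, sh]
          simp only [mul_assoc]
      _ ≤ B.ql (B.r (1 - k) ξ) S := B.ql_mono _ hSb
      _ = (inner ℂ (B.r ((1 - k) * (1 - k)) ξ) (B.l S ξ)).re := by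
          rw [B.ql_apply, B.comm, B.r_mul, B.r_adj (1 - k) (B.r (1 - k) ξ), sk1]
      _ ≤ ‖B.r ((1 - k) * (1 - k)) ξ‖ * ‖B.l S ξ‖ :=
          (Complex.re_le_norm _).trans (norm_inner_le_norm _ _)
      _ ≤ ε * (1 + ε) := by
          refine mul_le_mul ?_ nS (norm_nonneg _) hε.le
          refine le_trans ?_ b2
          refine aux_le_of_sq ?_ (norm_nonneg _)
          rw [B.r_norm_sq, B.r_norm_sq, sqS', star_mul, sk1]
          exact B.qr_mono ξ k3
      _ ≤ τ ^ 2 := by nlinarith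
  have e0 : auxN (fun j => B.l (a j) ξ - B.r (a j) η) ≤ D := auxN_le _ _ hD hd
  have e5 : auxN (fun j => B.l h (B.r k (B.l (a j) ξ - B.r (a j) η))) ≤ D :=
    (auxN_mono _ _ fun j => (B.l_contr h sh hh _).trans (B.r_contr k sk kk _)).trans e0
  have e6 : auxN (fun j => B.l h (B.l (a j) ξ - B.r (a j) η)) ≤ D :=
    (auxN_mono _ _ fun j => B.l_contr h sh hh _).trans e0
  have e7 : auxN (fun j => B.r k (B.l (1 - h) (B.r (a j) η))) ≤ τ :=
    (auxN_mono _ _ fun j => B.r_contr k sk kk _).trans e3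
  constructor
  · have id1 : ∀ j, B.l (h * a j * k) ξ - B.r (h * a j * k) η =
        (((B.l h (B.r k (B.l (a j) ξ - B.r (a j) η)) + B.l (h * a j) (B.r (1 - k) ξ))
          - B.l (h * a j * (1 - k)) ξ) - B.r k (B.l (1 - h) (B.r (a j) η)))
          + B.r ((1 - h) * a j * k) η := by
      intro j
      simp only [mul_sub, sub_mul, one_mul, mul_one, map_sub, ContinuousLinearMap.sub_apply,
        B.l_mul, B.r_mul, B.comm, B.l_one, B.r_one]
      abel
    rw [funext id1]
    have t1 := auxN_add (fun j => ((B.l h (B.r k (B.l (a j) ξ - B.r (a j) η)) + B.l (h * a j) (B.r (1 - k) ξ))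
          - B.l (h * a j * (1 - k)) ξ) - B.r k (B.l (1 - h) (B.r (a j) η)))
          (fun j => B.r ((1 - h) * a j * k) η)
    have t2 := auxN_sub (fun j => (B.l h (B.r k (B.l (a j) ξ - B.r (a j) η)) + B.l (h * a j) (B.r (1 - k) ξ))
          - B.l (h * a j * (1 - k)) ξ) (fun j => B.r k (B.l (1 - h) (B.r (a j) η)))
    have t3 := auxN_sub (fun j => B.l h (B.r k (B.l (a j) ξ - B.r (a j) η)) + B.l (h * a j) (B.r (1 - k) ξ))
          (fun j => B.l (h * a j * (1 - k)) ξ)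
    have t4 := auxN_add (fun j => B.l h (B.r k (B.l (a j) ξ - B.r (a j) η))) (fun j => B.l (h * a j) (B.r (1 - k) ξ))
    linarith
  · have id2 : ∀ j, B.r (a j) η = ((B.l (h * a j * k) ξ + B.l (h * a j * (1 - k)) ξ) -
        B.l h (B.l (a j) ξ - B.r (a j) η)) + B.l (1 - h) (B.r (a j) η) := by
      intro j
      simp only [mul_sub, sub_mul, one_mul, mul_one, map_sub, ContinuousLinearMap.sub_apply,
        B.l_mul, B.r_mul, B.comm, B.l_one, B.r_one]
      abel
    have t1 := auxN_add (fun j => (B.l (h * a j * k) ξ + B.l (h * a j * (1 - k)) ξ) -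
        B.l h (B.l (a j) ξ - B.r (a j) η)) (fun j => B.l (1 - h) (B.r (a j) η))
    have t2 := auxN_sub (fun j => B.l (h * a j * k) ξ + B.l (h * a j * (1 - k)) ξ)
        (fun j => B.l h (B.l (a j) ξ - B.r (a j) η))
    have t3 := auxN_add (fun j => B.l (h * a j * k) ξ) (fun j => B.l (h * a j * (1 - k)) ξ)
    rw [← funext id2] at t1
    have t4 : 1 - ε ≤ auxN (fun j => B.r (a j) η) := by
      have s1 : auxN (fun j => B.r (a j) η) ^ 2 = 1 - B.qr η (1 - T) := by
        rw [auxN_sq, map_sub, B.qr_one, hη, hT, map_sum]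
        simp only [B.r_norm_sq]; ring
      have s2 : B.qr η (1 - T) ≤ ε := by
        rw [B.qr_apply]
        refine ((Complex.re_le_norm _).trans (norm_inner_le_norm _ _)).trans ?_
        rw [hη, one_mul]; exact b4
      have s3 : 0 ≤ auxN (fun j => B.r (a j) η) := Real.sqrt_nonneg _
      nlinarith
    linarith
end norml

section core
variable {A : Type*} [CStarAlgebra A] [PartialOrder A] [StarOrderedRing A]
  {E : Type*} [NormedAddCommGroup E] [InnerProductSpace ℂ E]

lemma aux_var {n : ℕ} (x : Fin n → E) (μ : E) (h : ∑ w, x w = (n : ℝ) • μ) :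
    ∑ w, (x w - μ) = 0 ∧ ∑ w, ‖x w - μ‖ ^ 2 ≤ ∑ w, ‖x w‖ ^ 2 := by
  have e0 : ∑ w, (x w - μ) = 0 := by
    rw [Finset.sum_sub_distrib, h]
    simp [← Nat.cast_smul_eq_nsmul ℝ]
  refine ⟨e0, ?_⟩
  have e : ∀ w, ‖x w‖ ^ 2 = ‖x w - μ‖ ^ 2 + 2 * (inner ℂ (x w - μ) μ).re + ‖μ‖ ^ 2 := by
    intro w
    have := norm_add_sq (𝕜 := ℂ) (x w - μ) μ
    rw [sub_add_cancel] at this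
    exact this
  have e1 : ∑ w, (inner ℂ (x w - μ) μ).re = 0 := by
    rw [← Complex.re_sum, ← sum_inner, e0]; simp
  simp only [e, Finset.sum_add_distrib, ← Finset.mul_sum, e1]
  have : 0 ≤ ∑ w : Fin n, ‖μ‖ ^ 2 := by positivity
  linarith

variable [CompleteSpace E]

lemma AuxBim.side (B : AuxBim A E) {n : ℕ} (hn : 0 < n) (P Q : Fin n → A) (S : A) (q κ : ℝ)
    (hq : 0 < q) (ξ : E) (hξ : ‖ξ‖ = 1)
    (hP : ∀ w, 0 ≤ P w) (hPs : ∀ w, star (P w) = P w) (hPQ : ∀ w, P w ≤ Q w)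
    (hQP : ∀ w, Q w - (2 * q) • (Q w * Q w) ≤ P w)
    (hPP : ∀ w, P w * P w ≤ Q w * Q w) (hQ : ∑ w, Q w = (n : ℝ) • S) (hS : S ≤ 1)
    (h4 : ∑ w, B.ql ξ (Q w * Q w) ≤ 3 * n) (hκ : 1 - κ ≤ B.ql ξ S) :
    ∃ μ : E, ∑ w, B.l (P w) ξ = (n : ℝ) • μ ∧ ‖μ - ξ‖ ^ 2 ≤ κ + 6 * q ∧
      ∑ w, ‖B.l (P w) ξ‖ ^ 2 ≤ 3 * n := by
  have hn' : (0 : ℝ) < n := by exact_mod_cast hn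
  set Z : A := (n : ℝ)⁻¹ • ∑ w, P w with hZ
  have hnZ : ∑ w, P w = (n : ℝ) • Z := by
    rw [hZ, smul_smul, mul_inv_cancel₀ hn'.ne', one_smul]
  have Z0 : 0 ≤ Z := smul_nonneg (by positivity) (Finset.sum_nonneg fun w _ => hP w)
  have Z1 : Z ≤ 1 := by
    refine le_trans ?_ hS
    have : S = (n : ℝ)⁻¹ • ∑ w, Q w := by
      rw [hQ, smul_smul, inv_mul_cancel₀ hn'.ne', one_smul]
    rw [this, hZ]
    exact smul_le_smul_of_nonneg_left (Finset.sum_le_sum fun w _ => hPQ w) (by positivity)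
  refine ⟨B.l Z ξ, ?_, ?_, ?_⟩
  · rw [← Complex.coe_smul, ← _root_.smul_apply, ← map_smul, Complex.coe_smul, ← hnZ]
    simp
  · have e1 : B.l Z ξ - ξ = - B.l (1 - Z) ξ := by
      rw [map_sub, _root_.sub_apply, B.l_one]; abel
    have sZ : star Z = Z := IsSelfAdjoint.of_nonneg Z0
    have e2 : ‖B.l Z ξ - ξ‖ ^ 2 ≤ B.ql ξ (1 - Z) := by
      rw [e1, norm_neg, B.l_norm_sq, star_sub, star_one, sZ]
      refine B.ql_mono ξ (aux_sq_le _ (sub_nonneg.2 Z1) (by simpa using Z0))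
    have e3 : ∑ w, B.ql ξ (Q w) - 2 * q * ∑ w, B.ql ξ (Q w * Q w) ≤ ∑ w, B.ql ξ (P w) := by
      rw [Finset.mul_sum, ← Finset.sum_sub_distrib]
      refine Finset.sum_le_sum fun w _ => ?_
      have := B.ql_mono ξ (hQP w)
      rwa [map_sub, map_smul, smul_eq_mul] at this
    rw [← map_sum, ← map_sum (B.ql ξ) P, hnZ, hQ, map_smul, map_smul, smul_eq_mul, smul_eq_mul] at e3
    rw [map_sub, B.ql_one, hξ] at e2
    have e4 : (n : ℝ) * (1 - κ - 6 * q) ≤ n * B.ql ξ Z := by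
      nlinarith
    have := le_of_mul_le_mul_left e4 hn'
    linarith
  · refine le_trans (Finset.sum_le_sum fun w _ => ?_) h4
    rw [B.l_norm_sq, hPs]
    exact B.ql_mono ξ (hPP w)

/-- The commutator map. -/
def AuxBim.dd (B : AuxBim A E) (ξ η : E) : A →+ E where
  toFun x := B.l x ξ - B.r x η
  map_zero' := by simp
  map_add' x y := by simp; abel

/-- The adjoint commutator map. -/
def AuxBim.ds (B : AuxBim A E) (ξ η : E) : A →+ E where
  toFun x := B.l (star x) η - B.r (star x) ξ
  map_zero' := by simp
  map_add' x y := by simp; abel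

set_option maxHeartbeats 2000000 in
lemma AuxBim.core (B : AuxBim A E) {p : ℕ} (a : Fin p → A) (S T : A)
    (hS : S = ∑ j, star (a j) * a j) (hT : T = ∑ j, a j * star (a j))
    (ξ η : E) (hξ : ‖ξ‖ = 1) (hη : ‖η‖ = 1) (δ : ℝ) (hδ : 0 < δ) (r : ℕ) (hr : 0 < r)
    (hδr : √δ < 1 / (8 * r)) (S1 : S ≤ 1) (T1 : T ≤ 1)
    (hSξ : 1 - 3 * √δ ≤ B.ql ξ S) (hTη : 1 - 3 * √δ ≤ B.ql η T)
    (hd : ∑ j, ‖B.l (a j) ξ - B.r (a j) η‖ ^ 2 ≤ 2 * δ)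
    (hd' : ∑ j, ‖B.l (star (a j)) η - B.r (star (a j)) ξ‖ ^ 2 ≤ 2 * δ) :
    ∃ c : Fin r → A, (∀ j, ‖c j‖ ≤ 1) ∧
      ‖B.l ((∑ j, star (c j) * c j) - 1) ξ‖ ^ 2 < 12 / r ∧
      ‖B.l ((∑ j, c j * star (c j)) - 1) η‖ ^ 2 < 12 / r ∧
      (∑ j, ‖B.l (c j) ξ - B.r (c j) η‖ ^ 2) < 32 * δ ∧
      (∑ j, ‖B.l (star (c j)) η - B.r (star (c j)) ξ‖ ^ 2) < 32 * δ := by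
  have hr' : (0 : ℝ) < r := by exact_mod_cast hr
  have S0 : 0 ≤ S := hS ▸ Finset.sum_nonneg fun j _ => star_mul_self_nonneg _
  have T0 : 0 ≤ T := hT ▸ Finset.sum_nonneg fun j _ => mul_star_self_nonneg _
  have hSS := aux_sq_le S S0 S1
  have hTT := aux_sq_le T T0 T1
  obtain ⟨n, b, hn, r1, r2, r3, r4, r5⟩ := aux_rad (E := E) p a
  have hn' : (0 : ℝ) < n := by exact_mod_cast hn
  have hTa : ∑ j, star (a j) * T * a j ≤ S := by
    rw [hS]
    refine Finset.sum_le_sum fun j _ => ?_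
    simpa using star_left_conjugate_le_conjugate T1 (a j)
  have hSa : ∑ j, a j * S * star (a j) ≤ T := by
    rw [hT]
    refine Finset.sum_le_sum fun j _ => ?_
    simpa using star_right_conjugate_le_conjugate S1 (a j)
  have m1 : ∑ w, star (b w) * b w = (n : ℝ) • S := by
    have := r1 1
    simpa [hS] using this
  have m2 : ∑ w, b w * star (b w) = (n : ℝ) • T := by
    have := r2 1
    simpa [hT] using this
  rw [← hS, ← hT] at r3 r4
  have f1 : ∑ w, B.ql ξ ((star (b w) * b w) * (star (b w) * b w)) ≤ 3 * n := by
    rw [← map_sum]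
    have e1 := B.ql_mono ξ r3
    have e2 := B.ql_mono ξ hTa
    have e3 := B.ql_mono ξ hSS
    have e4 := B.ql_mono ξ S1
    rw [B.ql_one, hξ] at e4
    rw [map_smul, map_add, map_smul, smul_eq_mul, smul_eq_mul] at e1
    nlinarith
  have f2 : ∑ w, B.ql η ((b w * star (b w)) * (b w * star (b w))) ≤ 3 * n := by
    rw [← map_sum]
    have e1 := B.ql_mono η r4
    have e2 := B.ql_mono η hSa
    have e3 := B.ql_mono η hTT
    have e4 := B.ql_mono η T1
    rw [B.ql_one, hη] at e4
    rw [map_smul, map_add, map_smul, smul_eq_mul, smul_eq_mul] at e1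
    nlinarith
  obtain ⟨q, hq⟩ : ∃ q : ℝ, q = 1 / (4 * r) := ⟨_, rfl⟩
  have q0 : 0 < q := by rw [hq]; positivity
  have hqs : q = √q ^ 2 := (Real.sq_sqrt q0.le).symm
  choose F G G' t1 t2 t3 t4 t5 t6 t7 t8 t9 t10 t11 t12 t13 t14 t15 t16 t17 using
    fun w => aux_trunc (b w) q q0
  have hc : ∀ w, ‖B.l (F w) ξ - B.r (F w) η‖ ^ 2 +
      ‖B.l (star (F w)) η - B.r (star (F w)) ξ‖ ^ 2 ≤
      ‖B.l (b w) ξ - B.r (b w) η‖ ^ 2 + ‖B.l (star (b w)) η - B.r (star (b w)) ξ‖ ^ 2 := by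
    intro w
    refine B.trunc_comm (b w) (F w) (G w) (G' w) (√q) (t1 w) (t2 w) (t3 w) (t4 w) ?_ ?_ ?_ ?_
      (t9 w) (t10 w) ξ η
    · rw [← hqs]; exact t5 w
    · rw [← hqs]; exact t6 w
    · rw [← hqs]; exact t7 w
    · rw [← hqs]; exact t8 w
  obtain ⟨μ, u1, u2, u3⟩ := B.side hn (fun w => star (F w) * F w) (fun w => star (b w) * b w) S q
    (3 * √δ) q0 ξ hξ (fun w => star_mul_self_nonneg _) (fun w => by simp) t12 t14 t16 m1 S1 f1 hSξ
  obtain ⟨ν, v1, v2, v3⟩ := B.side hn (fun w => F w * star (F w)) (fun w => b w * star (b w)) T q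
    (3 * √δ) q0 η hη (fun w => mul_star_self_nonneg _) (fun w => by simp) t13 t15 t17 m2 T1 f2 hTη
  obtain ⟨x1, x2⟩ := aux_var _ _ u1
  obtain ⟨y1, y2⟩ := aux_var _ _ v1
  have g1 : ∑ w, ‖B.l (b w) ξ - B.r (b w) η‖ ^ 2 ≤ n * (2 * δ) := by
    have := r5 (B.dd ξ η)
    simp only [AuxBim.dd, AddMonoidHom.coe_mk, ZeroHom.coe_mk] at this
    rw [this]
    exact mul_le_mul_of_nonneg_left hd hn'.le
  have g2 : ∑ w, ‖B.l (star (b w)) η - B.r (star (b w)) ξ‖ ^ 2 ≤ n * (2 * δ) := by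
    have := r5 (B.ds ξ η)
    simp only [AuxBim.ds, AddMonoidHom.coe_mk, ZeroHom.coe_mk] at this
    rw [this]
    exact mul_le_mul_of_nonneg_left hd' hn'.le
  obtain ⟨g, hg⟩ : ∃ g : Fin n → ℝ, g = fun w => (3 / (8 * δ)) * (‖B.l (F w) ξ - B.r (F w) η‖ ^ 2 +
      ‖B.l (star (F w)) η - B.r (star (F w)) ξ‖ ^ 2) := ⟨_, rfl⟩
  have g3 : ∑ w, g w ≤ n * (3 / 2) := by
    rw [hg, ← Finset.mul_sum]
    have : ∑ w, (‖B.l (F w) ξ - B.r (F w) η‖ ^ 2 +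
      ‖B.l (star (F w)) η - B.r (star (F w)) ξ‖ ^ 2) ≤ n * (4 * δ) := by
      refine (Finset.sum_le_sum fun w _ => hc w).trans ?_
      rw [Finset.sum_add_distrib]
      linarith
    calc _ ≤ 3 / (8 * δ) * (n * (4 * δ)) := mul_le_mul_of_nonneg_left this (by positivity)
      _ = _ := by field_simp; ring
  obtain ⟨ω, hω⟩ := aux_greedy n hn (fun w => B.l (star (F w) * F w) ξ - μ)
    (fun w => B.l (F w * star (F w)) η - ν) g x1 y1 ((r : ℝ) • (μ - ξ)) ((r : ℝ) • (ν - η)) (15 / 2)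
    (by rw [Finset.sum_add_distrib, Finset.sum_add_distrib]; linarith) r
  have sr : (√(r:ℝ))⁻¹ * (√(r:ℝ))⁻¹ = (r : ℝ)⁻¹ := by
    rw [← mul_inv, Real.mul_self_sqrt hr'.le]
  have sr2 : ((√(r:ℝ))⁻¹) ^ 2 = (r : ℝ)⁻¹ := by rw [pow_two, sr]
  obtain ⟨c, hcdef⟩ : ∃ c : Fin r → A, c = fun l => (√(r:ℝ))⁻¹ • F (ω l) := ⟨_, rfl⟩
  have cs : ∀ l, star (c l) = (√(r:ℝ))⁻¹ • star (F (ω l)) := by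
    intro l; rw [hcdef]; simp
  have c1 : ∀ l, star (c l) * c l = (r:ℝ)⁻¹ • (star (F (ω l)) * F (ω l)) := by
    intro l; rw [cs, hcdef, smul_mul_smul_comm, sr]
  have c2 : ∀ l, c l * star (c l) = (r:ℝ)⁻¹ • (F (ω l) * star (F (ω l))) := by
    intro l; rw [cs, hcdef, smul_mul_smul_comm, sr]
  have lsm : ∀ (t : ℝ) (x : A) (v : E), B.l (t • x) v = t • B.l x v := by
    intro t x v; rw [← Complex.coe_smul, map_smul]; simp
  have rsm : ∀ (t : ℝ) (x : A) (v : E), B.r (t • x) v = t • B.r x v := by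
    intro t x v; rw [← Complex.coe_smul, map_smul]; simp
  have k1 : (r : ℝ) • (μ - ξ) + ∑ l, (B.l (star (F (ω l)) * F (ω l)) ξ - μ)
      = (r : ℝ) • B.l ((∑ j, star (c j) * c j) - 1) ξ := by
    simp only [c1]
    rw [← Finset.smul_sum, map_sub, _root_.sub_apply, B.l_one, lsm, smul_sub, smul_sub, smul_smul,
      mul_inv_cancel₀ hr'.ne', one_smul, Finset.sum_sub_distrib, map_sum]
    simp [← Nat.cast_smul_eq_nsmul ℝ]
  have k2 : (r : ℝ) • (ν - η) + ∑ l, (B.l (F (ω l) * star (F (ω l))) η - ν)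
      = (r : ℝ) • B.l ((∑ j, c j * star (c j)) - 1) η := by
    simp only [c2]
    rw [← Finset.smul_sum, map_sub, _root_.sub_apply, B.l_one, lsm, smul_sub, smul_sub, smul_smul,
      mul_inv_cancel₀ hr'.ne', one_smul, Finset.sum_sub_distrib, map_sum]
    simp [← Nat.cast_smul_eq_nsmul ℝ]
  have k3 : ∑ l, g (ω l) = (3 / (8 * δ)) * r * (∑ j, ‖B.l (c j) ξ - B.r (c j) η‖ ^ 2 +
      ∑ j, ‖B.l (star (c j)) η - B.r (star (c j)) ξ‖ ^ 2) := by
    rw [← Finset.sum_add_distrib, Finset.mul_sum, hg]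
    refine Finset.sum_congr rfl fun l _ => ?_
    rw [cs, hcdef]
    simp only [lsm, rsm, ← smul_sub, norm_smul, mul_pow, Real.norm_eq_abs, sq_abs, sr2]
    field_simp
  simp only [k1, k2, k3, norm_smul, mul_pow, Real.norm_eq_abs, sq_abs] at hω
  refine ⟨c, ?_, ?_⟩
  · intro l
    have h1 : star (c l) * c l ≤ 1 := by
      rw [c1]
      have := t11 (ω l)
      have e : 4 * q = (r : ℝ)⁻¹ := by rw [hq]; field_simp
      rwa [e] at this
    have h2 := (CStarAlgebra.norm_le_one_iff_of_nonneg _ (star_mul_self_nonneg (c l))).2 h1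
    rw [CStarRing.norm_star_mul_self] at h2
    nlinarith [norm_nonneg (c l)]
  · set X := ‖B.l ((∑ j, star (c j) * c j) - 1) ξ‖ ^ 2
    set Y := ‖B.l ((∑ j, c j * star (c j)) - 1) η‖ ^ 2
    set C := ∑ j, ‖B.l (c j) ξ - B.r (c j) η‖ ^ 2 with hC
    set D := ∑ j, ‖B.l (star (c j)) η - B.r (star (c j)) ξ‖ ^ 2 with hD
    have X0 : 0 ≤ X := by positivity
    have Y0 : 0 ≤ Y := by positivity
    have C0 : 0 ≤ C := by positivity
    have D0 : 0 ≤ D := by positivity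
    have w1 : √δ * r < 1 / 8 := by
      rw [lt_div_iff₀ (by positivity)] at hδr
      linarith
    have w2 : q * r = 1 / 4 := by rw [hq]; field_simp
    have w3 : (r:ℝ) ^ 2 * X + (r:ℝ) ^ 2 * Y + 3 / (8 * δ) * r * (C + D) < 12 * r := by
      have z1 : (r:ℝ)^2 * ‖μ - ξ‖ ^ 2 ≤ r ^ 2 * (3 * √δ + 6 * q) :=
        mul_le_mul_of_nonneg_left u2 (by positivity)
      have z2 : (r:ℝ)^2 * ‖ν - η‖ ^ 2 ≤ r ^ 2 * (3 * √δ + 6 * q) :=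
        mul_le_mul_of_nonneg_left v2 (by positivity)
      have z3 : (r:ℝ) ^ 2 * (3 * √δ + 6 * q) = r * (3 * (√δ * r) + 6 * (q * r)) := by ring
      rw [z3, w2] at z1 z2
      have z4 : r * (√δ * r) ≤ r * (1 / 8 : ℝ) := mul_le_mul_of_nonneg_left w1.le hr'.le
      linarith
    have p1 : 0 ≤ (r:ℝ) ^ 2 * X := by positivity
    have p2 : 0 ≤ (r:ℝ) ^ 2 * Y := by positivity
    have p3 : 0 ≤ 3 / (8 * δ) * r * C := by positivity
    have p4 : 0 ≤ 3 / (8 * δ) * r * D := by positivity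
    rw [mul_add] at w3
    have last : ∀ C : ℝ, 3 / (8 * δ) * r * C < 12 * r → C < 32 * δ := by
      intro C h
      have : 3 / (8 * δ) * r * C = (3 / (8 * δ) * C) * r := by ring
      rw [this] at h
      have h := lt_of_mul_lt_mul_right h hr'.le
      rw [div_mul_eq_mul_div, div_lt_iff₀ (by positivity)] at h
      linarith
    have last2 : ∀ X : ℝ, (r:ℝ) ^ 2 * X < 12 * r → X < 12 / r := by
      intro X h
      rw [lt_div_iff₀ hr']
      have : (r:ℝ) ^ 2 * X = X * r * r := by ring
      rw [this] at h
      exact lt_of_mul_lt_mul_right h hr'.le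
    exact ⟨last2 _ (by linarith), last2 _ (by linarith), last _ (by linarith), last _ (by linarith)⟩

end core

section main
variable {A : Type*} [CStarAlgebra A]
  {E : Type*} [NormedAddCommGroup E] [InnerProductSpace ℂ E] [CompleteSpace E]

lemma AuxBim.ql_near (B : AuxBim A E) (S : A) (ξ : E) (hξ : ‖ξ‖ = 1) (ε : ℝ)
    (h : ‖B.l (1 - S) ξ‖ < ε) : 1 - ε ≤ B.ql ξ S ∧ B.ql ξ S ≤ 1 + ε := by
  have h1 : |B.ql ξ (1 - S)| ≤ ε := by
    rw [B.ql_apply]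
    refine (Complex.abs_re_le_norm _).trans ((norm_inner_le_norm _ _).trans ?_)
    rw [hξ, one_mul]; exact h.le
  rw [map_sub, B.ql_one, hξ] at h1
  rw [abs_le] at h1
  constructor <;> linarith

lemma AuxBim.qr_near (B : AuxBim A E) (S : A) (ξ : E) (hξ : ‖ξ‖ = 1) (ε : ℝ)
    (h : ‖B.r (1 - S) ξ‖ < ε) : 1 - ε ≤ B.qr ξ S ∧ B.qr ξ S ≤ 1 + ε := by
  have h1 : |B.qr ξ (1 - S)| ≤ ε := by
    rw [B.qr_apply]
    refine (Complex.abs_re_le_norm _).trans ((norm_inner_le_norm _ _).trans ?_)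
    rw [hξ, one_mul]; exact h.le
  rw [map_sub, B.qr_one, hξ] at h1
  rw [abs_le] at h1
  constructor <;> linarith

lemma AuxBim.dual (B : AuxBim A E) {p : ℕ} (a : Fin p → A) (ξ η : E) :
    ∑ j, ‖B.l (star (a j)) η - B.r (star (a j)) ξ‖ ^ 2 =
    ∑ j, ‖B.l (a j) ξ - B.r (a j) η‖ ^ 2 + B.ql η (∑ j, a j * star (a j)) +
      B.qr ξ (∑ j, star (a j) * a j) - B.ql ξ (∑ j, star (a j) * a j) -
      B.qr η (∑ j, a j * star (a j)) := by
  simp only [map_sum, ← Finset.sum_add_distrib, ← Finset.sum_sub_distrib]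
  refine Finset.sum_congr rfl fun j _ => ?_
  have e1 := norm_sub_sq (𝕜 := ℂ) (B.l (star (a j)) η) (B.r (star (a j)) ξ)
  have e2 := norm_sub_sq (𝕜 := ℂ) (B.l (a j) ξ) (B.r (a j) η)
  have e3 : inner ℂ (B.l (a j) ξ) (B.r (a j) η) =
      inner ℂ (B.r (star (a j)) ξ) (B.l (star (a j)) η) := by
    rw [B.l_adj, B.comm, B.r_adj, star_star]
  have e4 : RCLike.re (inner ℂ (B.l (star (a j)) η) (B.r (star (a j)) ξ)) =
      RCLike.re (inner ℂ (B.l (a j) ξ) (B.r (a j) η)) := by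
    rw [e3, inner_re_symm]
  have e5 := B.l_norm_sq (star (a j)) η
  have e6 := B.r_norm_sq (star (a j)) ξ
  rw [star_star] at e5 e6
  rw [e1, e2, e4, e5, e6, B.l_norm_sq, B.r_norm_sq]
  ring

set_option maxHeartbeats 2000000 in
theorem AuxBim.main (B : AuxBim A E) (δ : ℝ) (hδ : 0 < δ) (r : ℕ)
    (hδr : √δ < 1 / (8 * r)) (ξ η : E) (hξ : ‖ξ‖ = 1) (hη : ‖η‖ = 1)
    (hrel : ∀ ε : ℝ, 0 < ε → ∃ (p : ℕ) (a : Fin p → A),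
      ‖B.l (1 - ∑ j, star (a j) * a j) ξ‖ < ε ∧
      ‖B.r (1 - ∑ j, star (a j) * a j) ξ‖ < ε ∧
      ‖B.l (1 - ∑ j, a j * star (a j)) η‖ < ε ∧
      ‖B.r (1 - ∑ j, a j * star (a j)) η‖ < ε ∧
      (∑ j, ‖B.l (a j) ξ - B.r (a j) η‖ ^ 2) < δ) :
    ∃ c : Fin r → A, (∀ j, ‖c j‖ ≤ 1) ∧
      ‖B.l ((∑ j, star (c j) * c j) - 1) ξ‖ ^ 2 < 12 / r ∧
      ‖B.l ((∑ j, c j * star (c j)) - 1) η‖ ^ 2 < 12 / r ∧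
      (∑ j, ‖B.l (c j) ξ - B.r (c j) η‖ ^ 2) < 32 * δ ∧
      (∑ j, ‖B.l (star (c j)) η - B.r (star (c j)) ξ‖ ^ 2) < 32 * δ := by
  letI := CStarAlgebra.spectralOrder A
  haveI := CStarAlgebra.spectralOrderedRing A
  have d0 : 0 < √δ := Real.sqrt_pos.2 hδ
  have dsq : √δ ^ 2 = δ := Real.sq_sqrt hδ.le
  have hr : 0 < r := by
    rcases Nat.eq_zero_or_pos r with h | h
    · subst h; simp at hδr; linarith
    · exact h
  have hr' : (1 : ℝ) ≤ r := by exact_mod_cast hr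
  have d8 : √δ < 1 / 8 := by
    refine hδr.trans_le ?_
    rw [div_le_div_iff₀ (by positivity) (by positivity)]
    linarith
  obtain ⟨s, hs⟩ : ∃ s, s = √δ := ⟨_, rfl⟩
  rw [← hs] at d0 dsq d8
  obtain ⟨τ, hτ⟩ : ∃ τ : ℝ, τ = s / 15 := ⟨_, rfl⟩
  obtain ⟨ε, hε⟩ : ∃ ε : ℝ, ε = τ ^ 2 / 2 := ⟨_, rfl⟩
  have τ0 : 0 < τ := by rw [hτ]; positivity
  have ε0 : 0 < ε := by rw [hε]; positivity
  have sτ : s = 15 * τ := by rw [hτ]; ring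
  have τ1 : τ ≤ 1 := by linarith
  have ετ : ε ≤ τ := by nlinarith
  have ε1 : ε ≤ 1 := by linarith
  have ετ2 : 2 * ε ≤ τ ^ 2 := by linarith
  obtain ⟨p, a, b1, b2, b3, b4, hd⟩ := hrel ε ε0
  obtain ⟨S, hS⟩ : ∃ S, S = ∑ j, star (a j) * a j := ⟨_, rfl⟩
  obtain ⟨T, hT⟩ : ∃ T, T = ∑ j, a j * star (a j) := ⟨_, rfl⟩
  have hdual := B.dual a ξ η
  rw [← hS] at b1 b2 hdual
  rw [← hT] at b3 b4 hdual
  have n1 := B.ql_near S ξ hξ ε b1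
  have n2 := B.qr_near S ξ hξ ε b2
  have n3 := B.ql_near T η hη ε b3
  have n4 := B.qr_near T η hη ε b4
  have hD : ∑ j, ‖B.l (a j) ξ - B.r (a j) η‖ ^ 2 ≤ (s + 2 * τ) ^ 2 := by nlinarith
  have hD' : ∑ j, ‖B.l (star (a j)) η - B.r (star (a j)) ξ‖ ^ 2 ≤ (s + 2 * τ) ^ 2 := by
    rw [hdual]; nlinarith
  have S0 : 0 ≤ S := hS ▸ Finset.sum_nonneg fun j _ => star_mul_self_nonneg _
  have T0 : 0 ≤ T := hT ▸ Finset.sum_nonneg fun j _ => mul_star_self_nonneg _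
  obtain ⟨h, h1, h2, h3, h4, h5, h6⟩ := aux_exists_h T T0
  obtain ⟨k, k1, k2, k3, k4, k5, k6⟩ := aux_exists_h S S0
  obtain ⟨N1, N2⟩ := B.normalize a S T h k hS hT ξ η hξ hη ε τ (s + 2 * τ) ε0 ε1 ετ ετ2
    (by positivity) h1 k1 h2 k2 h5 h6 k5 k6 b1.le b2.le b3.le b4.le hD
  obtain ⟨N3, N4⟩ := B.normalize (fun j => star (a j)) T S k h (by simp [hT]) (by simp [hS]) η ξ hη hξ
    ε τ (s + 2 * τ) ε0 ε1 ετ ετ2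
    (by positivity) k1 h1 k2 h2 k5 k6 h5 h6 b3.le b4.le b1.le b2.le hD'
  have st : ∀ j, star (h * a j * k) = k * star (a j) * h := by
    intro j; rw [star_mul, star_mul, h1, k1, mul_assoc]
  have up : ∀ v : Fin p → E, auxN v ≤ s + 2 * τ + 4 * τ → ∑ j, ‖v j‖ ^ 2 ≤ 2 * δ := by
    intro v hv
    rw [← auxN_sq, ← dsq]
    have : 0 ≤ auxN v := Real.sqrt_nonneg _
    nlinarith
  have lo : ∀ v : Fin p → E, 1 - (s + 2 * τ) - 3 * τ ≤ auxN v → 1 - 3 * s ≤ ∑ j, ‖v j‖ ^ 2 := by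
    intro v hv
    rw [← auxN_sq]
    nlinarith
  refine B.core (fun j => h * a j * k) _ _ rfl rfl ξ η hξ hη δ hδ r hr hδr ?_ ?_ ?_ ?_ ?_ ?_
  · refine le_trans ?_ k3
    have : ∑ j, star (h * a j * k) * (h * a j * k) =
        star k * (∑ j, star (a j) * (h * h) * a j) * k := by
      rw [Finset.mul_sum, Finset.sum_mul]
      refine Finset.sum_congr rfl fun j _ => ?_
      rw [st, k1]; simp only [mul_assoc]
    rw [this]
    nth_rewrite 3 [← k1]
    refine star_left_conjugate_le_conjugate ?_ k
    rw [hS]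
    refine Finset.sum_le_sum fun j _ => ?_
    simpa using star_left_conjugate_le_conjugate h2 (a j)
  · refine le_trans ?_ h3
    have : ∑ j, (h * a j * k) * star (h * a j * k) =
        star h * (∑ j, a j * (k * k) * star (a j)) * h := by
      rw [Finset.mul_sum, Finset.sum_mul]
      refine Finset.sum_congr rfl fun j _ => ?_
      rw [st, h1]; simp only [mul_assoc]
    rw [this]
    nth_rewrite 3 [← h1]
    refine star_left_conjugate_le_conjugate ?_ h
    rw [hT]
    refine Finset.sum_le_sum fun j _ => ?_
    simpa using star_right_conjugate_le_conjugate k2 (a j)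
  · have := lo _ N2
    simp only [B.l_norm_sq] at this
    rw [← hs, map_sum]
    exact this
  · have := lo _ N4
    simp only [B.l_norm_sq, ← st, star_star] at this
    rw [← hs, map_sum]
    exact this
  · exact up _ N1
  · have := up _ N3
    simp only [← st] at this
    exact this

end main

theorem lemma2_5 {K : Type*} [NormedAddCommGroup K] [InnerProductSpace ℂ K]
    [CompleteSpace K] {M : VonNeumannAlgebra K}
    {E : Type*} [NormedAddCommGroup E] [InnerProductSpace ℂ E] [CompleteSpace E]
    (b : HilbertBimodule M E) (δ : ℝ) (hδ : 0 < δ) (r : ℕ)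
    (hδr : Real.sqrt δ < 1 / (8 * r))
    (ξ η : E) (hξ : ‖ξ‖ = 1) (hη : ‖η‖ = 1) (hrel : b.AlmostRelatedPair δ ξ η) :
    ∃ c : Fin r → M,
      (∀ j, ‖c j‖ ≤ 1) ∧
      ‖b.lsmul ((∑ j, star (c j) * c j) - 1) ξ‖ ^ 2 < 12 / r ∧
      ‖b.lsmul ((∑ j, c j * star (c j)) - 1) η‖ ^ 2 < 12 / r ∧
      (∑ j, ‖b.lsmul (c j) ξ - b.rsmul η (c j)‖ ^ 2) < 32 * δ ∧
      (∑ j, ‖b.lsmul (star (c j)) η - b.rsmul ξ (star (c j))‖ ^ 2) < 32 * δ := by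
  have hcl : IsClosed (M : Set (K →L[ℂ] K)) := by
    rw [← M.centralizer_centralizer]
    exact Set.isClosed_centralizer _
  haveI : IsClosed (M.toStarSubalgebra : Set (K →L[ℂ] K)) := hcl
  letI : CStarAlgebra M := inferInstanceAs (CStarAlgebra M.toStarSubalgebra)
  let B : AuxBim M E :=
    { l := b.L.toAlgHom.toLinearMap
      r := b.R.toAlgHom.toLinearMap ∘ₗ (MulOpposite.opLinearEquiv ℂ).toLinearMap
      l_one := fun v => by simp
      r_one := fun v => by simp
      l_mul := fun x y v => by simp
      r_mul := fun x y v => by simp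
      l_star := fun x => map_star b.L x
      r_star := fun x => map_star b.R (MulOpposite.op x)
      comm := fun x y v => b.commutes x y v }
  refine B.main δ hδ r hδr ξ η hξ hη ?_
  intro ε hε
  obtain ⟨p, a, a1, a2, a3, a4, a5, a6, a7, a8, a9⟩ := hrel ε hε
  exact ⟨p, a, a1, a3, a6, a8, a9⟩
end
end
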